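/- arXiv:math/0508172 — 2 statements merged into one kernel-verified Lean document; each statement's English description precedes it below -/
import Mathlib

section
/- Let (G, 𝓐) be a local convergence pairing on a Peano continuum X without cut points and let A, B ∈ 𝓐. If (g_i) ⊆ st(A) acts as a convergence sequence on A with attractor p and repeller n, and A ∩ B ≠ ∅, then there exists a subsequence (h_i) of (g_i) such that for every compact C ⊆ B \ {n} and every open neighborhood U of p, h_i(C) ⊆ U for all sufficiently large i. -/
/-! The theorem rests on three facts.

*Collapsing* (`collapse_or_const`). Let `E` be a member of `𝓐` whose translates `g i • E` come
close to the point `p`. Since `𝓐` is null, either these translates shrink to `p`, or a single set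
through `p` equals infinitely many of them. By local connectedness, translates of `E` do come close
to `p` as soon as `E` crosses a member that shrinks to `p` (`meets_of_collapse`), or crosses `A` and
misses the repeller `n` (`meets_of_conv`): in each case a point of `E`, or two points separated by
`E`, are carried to `p`. Hence shrinking to `p` propagates along crossing sequences that
avoid the relevant points (`chain_collapse`).

*Common stabilizers* (`attractor_eq`). If a sequence stabilizes the intersecting members `A` and
`B` and converges on both, the attractors agree; passing to inverses, so do the repellers. This is
immediate if `A ∩ B` has at least three points. If it has two, it contains all attractors and
repellers, and the last intermediate term of a crossing sequence from `A` to `B` avoiding `A ∩ B`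
shrinks to both attractors. If `A ∩ B = {c}`, both attractors are `c`: otherwise, after
inverting if necessary, ping-pong produces a loxodromic element with fixed points `c` and
`r ≠ c` in `B` (`exists_loxodromic`), and a crossing sequence avoiding `{r, c}` shrinks to `r` under
its inverse powers, which puts `r` into `A`, a contradiction.

*Recurrence* (`attract_of_const`). If `g i • B` equals a fixed set infinitely often, then dividing
by one of the group elements gives a sequence in both stabilizers, and the previous fact yields
the claim, together with `n ∈ B`.

If no translate of `B` recurs, it remains to see that `g i • B` comes close to `p`. This is clear
if `A ∩ B` has a point other than `n`. If `A ∩ B = {n}`, a crossing sequence from `A` to `B`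
avoiding `n` shrinks to `p`: a recurring translate of a term through `p` would force that term to
contain `n`. -/

open Set Filter Topology Pointwise

/-- The set `E` separates the points `x` and `y`: both lie outside `E` and in
different connected components of the complement of `E`. -/
def SepPts {X : Type*} [TopologicalSpace X] (E : Set X) (x y : X) : Prop :=
  x ∉ E ∧ y ∉ E ∧ connectedComponentIn Eᶜ x ≠ connectedComponentIn Eᶜ y

/-- The set `E` separates the set `Y ⊆ X \ E`: two points of `Y` lie in different
connected components of the complement of `E`. -/
def SepSet {X : Type*} [TopologicalSpace X] (E Y : Set X) : Prop :=
  Y ⊆ Eᶜ ∧ ∃ x ∈ Y, ∃ y ∈ Y, connectedComponentIn Eᶜ x ≠ connectedComponentIn Eᶜ y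

/-- Two (closed) sets `A` and `B` cross: they intersect, or each separates the other. -/
def Crosses {X : Type*} [TopologicalSpace X] (A B : Set X) : Prop :=
  (A ∩ B).Nonempty ∨ (SepSet A B ∧ SepSet B A)

/-- There is a (finite) crossing sequence in `𝓐` from `A` to `B`. -/
def CrossSeqFromTo {X : Type*} [TopologicalSpace X] (𝓐 : Set (Set X)) (A B : Set X) : Prop :=
  ∃ (n : ℕ) (c : ℕ → Set X), c 0 = A ∧ c n = B ∧ (∀ i ≤ n, c i ∈ 𝓐) ∧
    ∀ i < n, Crosses (c i) (c (i + 1))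

/-- A collection `𝓐` is cross-connected: any two of its elements are joined by a
crossing sequence in `𝓐`. -/
def CrossConnected {X : Type*} [TopologicalSpace X] (𝓐 : Set (Set X)) : Prop :=
  ∀ A ∈ 𝓐, ∀ B ∈ 𝓐, CrossSeqFromTo 𝓐 A B

/-- There is a crossing sequence `A, A_1, …, A_n, B` in `𝓐` (with `n ≥ 1`) whose
intermediate terms `A_1, …, A_n` are disjoint from `D`. -/
def CrossSeqAvoiding {X : Type*} [TopologicalSpace X] (𝓐 : Set (Set X)) (A B D : Set X) :
    Prop :=
  ∃ n : ℕ, 1 ≤ n ∧ ∃ c : ℕ → Set X, c 0 = A ∧ c (n + 1) = B ∧ (∀ i ≤ n + 1, c i ∈ 𝓐) ∧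
    (∀ i ≤ n, Crosses (c i) (c (i + 1))) ∧ ∀ i, 1 ≤ i → i ≤ n → c i ∩ D = ∅

/-- A collection of subsets of a metric space is null if for every `ε > 0` only finitely
many of its members have diameter greater than `ε`. -/
def NullFam {X : Type*} [PseudoMetricSpace X] (𝓐 : Set (Set X)) : Prop :=
  ∀ ε : ℝ, 0 < ε → {A ∈ 𝓐 | ε < Metric.diam A}.Finite

/-- A collection `𝓐` is fine if any two distinct points are separated by the union of
some finite subcollection of `𝓐`. -/
def FineFam {X : Type*} [PseudoMetricSpace X] (𝓐 : Set (Set X)) : Prop :=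
  ∀ x y : X, x ≠ y → ∃ 𝓑 ⊆ 𝓐, 𝓑.Finite ∧ SepPts (⋃₀ 𝓑) x y

/-- A sequence of maps `T i : X → X` acts as a convergence sequence on the subset `A`,
with repeller `n ∈ A` and attractor `p ∈ A`: for every compact `C ⊆ A \ {n}` and every
open neighborhood `U` of `p`, eventually `T i '' C ⊆ U`. -/
def ConvSeqOn {X : Type*} [TopologicalSpace X] (A : Set X) (T : ℕ → X → X) (n p : X) :
    Prop :=
  n ∈ A ∧ p ∈ A ∧ ∀ C : Set X, C ⊆ A → IsCompact C → n ∉ C →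
    ∀ U : Set X, IsOpen U → p ∈ U → ∀ᶠ i in atTop, T i '' C ⊆ U

/-- The stabilizer of a subset `A ⊆ X` in `G`. -/
def stab (G : Type*) {X : Type*} [Group G] [MulAction G X] (A : Set X) : Set G :=
  {g : G | g • A = A}

/-- The subset `S` of the group `G` acts as a convergence group on `A ⊆ X`: every
sequence of distinct elements of `S` has a subsequence acting as a convergence
sequence on `A`. -/
def ConvGroupOn {G X : Type*} [Group G] [MulAction G X] [TopologicalSpace X]
    (S : Set G) (A : Set X) : Prop :=
  ∀ g : ℕ → G, (∀ i, g i ∈ S) → Function.Injective g →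
    ∃ k : ℕ → ℕ, StrictMono k ∧ ∃ n p : X,
      ConvSeqOn A (fun i => (g (k i) • · : X → X)) n p

/-- `(G, 𝓐)` is a local convergence pairing on `X`. -/
structure IsLocalConvPairing (G : Type*) {X : Type*} [Group G] [MulAction G X]
    [MetricSpace X] (𝓐 : Set (Set X)) : Prop where
  closed : ∀ A ∈ 𝓐, IsClosed A
  invariant : ∀ g : G, ∀ A ∈ 𝓐, g • A ∈ 𝓐
  big : ∀ A ∈ 𝓐, 2 < A.encard
  null : NullFam 𝓐
  fine : FineFam 𝓐
  stabConv : ∀ A ∈ 𝓐, ConvGroupOn (stab G A) A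
  connect : ∀ A ∈ 𝓐, ∀ B ∈ 𝓐, (A ∩ B).encard ≤ 2 →
    (∀ c : X, A ∩ B = {c} → ∀ b ∈ B, b ≠ c → CrossSeqAvoiding 𝓐 A B {b, c}) ∧
    ((¬ ∃ c : X, A ∩ B = {c}) → CrossSeqAvoiding 𝓐 A B (A ∩ B))

/-! ### Collapsing of sets under a sequence of group elements -/

/-- The translates `g i • E` shrink to the point `p`. -/
def CollapsesTo {G X : Type*} [Group G] [MulAction G X] [TopologicalSpace X]
    (g : ℕ → G) (E : Set X) (p : X) : Prop :=
  ∀ U : Set X, IsOpen U → p ∈ U → ∀ᶠ i in atTop, g i • E ⊆ U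

/-- The translates `g i • E` eventually meet every neighborhood of the point `p`. -/
def MeetsAt {G X : Type*} [Group G] [MulAction G X] [TopologicalSpace X]
    (g : ℕ → G) (E : Set X) (p : X) : Prop :=
  ∀ V : Set X, IsOpen V → p ∈ V → ∀ᶠ i in atTop, ((g i • E) ∩ V).Nonempty

theorem Crosses.symm' {X : Type*} [TopologicalSpace X] {A B : Set X} (h : Crosses A B) :
    Crosses B A := by
  rcases h with h | ⟨h1, h2⟩
  · exact Or.inl (by rwa [inter_comm])
  · exact Or.inr ⟨h2, h1⟩

theorem ConvSeqOn.tendsto_pt {X : Type*} [TopologicalSpace X] {A : Set X}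
    {T : ℕ → X → X} {n p x : X} (h : ConvSeqOn A T n p) (hx : x ∈ A) (hxn : x ≠ n) :
    Tendsto (fun i => T i x) atTop (𝓝 p) := by
  rw [tendsto_nhds]
  intro U hU hp
  filter_upwards [h.2.2 {x} (by simpa using hx) isCompact_singleton (by simpa using hxn.symm)
    U hU hp] with i hi
  exact hi ⟨x, rfl, rfl⟩

theorem ConvSeqOn.subseq {X : Type*} [TopologicalSpace X] {A : Set X}
    {T : ℕ → X → X} {n p : X} (h : ConvSeqOn A T n p) {k : ℕ → ℕ} (hk : StrictMono k) :
    ConvSeqOn A (fun i => T (k i)) n p :=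
  ⟨h.1, h.2.1, fun C hC hCc hn U hU hp =>
    hk.tendsto_atTop.eventually (h.2.2 C hC hCc hn U hU hp)⟩

section
set_option linter.unusedSectionVars false

variable {G X : Type*} [Group G] [MulAction G X] [MetricSpace X] [CompactSpace X]
  [ContinuousConstSMul G X]

theorem stab_mem {A : Set X} {g : G} (hg : g ∈ stab G A) {x : X} (hx : x ∈ A) :
    g • x ∈ A := by
  have h : g • A = A := hg
  rw [← h]
  exact smul_mem_smul_set hx

theorem stab_inv {A : Set X} {g : G} (hg : g ∈ stab G A) : g⁻¹ ∈ stab G A := by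
  have h : g • A = A := hg
  exact inv_smul_eq_iff.2 h.symm

theorem stab_mul {A : Set X} {g k : G} (hg : g ∈ stab G A) (hk : k ∈ stab G A) :
    g * k ∈ stab G A := by
  have h : g • A = A := hg
  have h' : k • A = A := hk
  change (g * k) • A = A
  rw [mul_smul, h', h]

theorem stab_pow {A : Set X} {g : G} (hg : g ∈ stab G A) (m : ℕ) :
    g ^ m ∈ stab G A := by
  induction m with
  | zero => simp [stab]
  | succ m ih => rw [pow_succ]; exact stab_mul ih hg

/-- Inverting a convergence sequence swaps attractor and repeller. -/
theorem conv_inv {A : Set X} (hA : IsClosed A) {g : ℕ → G} (hg : ∀ i, g i ∈ stab G A)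
    {n p : X} (h : ConvSeqOn A (fun i (x : X) => g i • x) n p) :
    ConvSeqOn A (fun i (x : X) => (g i)⁻¹ • x) p n := by
  refine ⟨h.2.1, h.1, ?_⟩
  intro C hC hCc hp U hU hn
  filter_upwards [h.2.2 (A \ U) sdiff_subset (hA.isCompact.diff hU) (fun h => h.2 hn)
    Cᶜ hCc.isClosed.isOpen_compl hp] with i hi
  rintro _ ⟨x, hx, rfl⟩
  by_contra hxU
  have := hi ⟨(g i)⁻¹ • x, ⟨stab_mem (stab_inv (hg i)) (hC hx), hxU⟩, rfl⟩
  simp only [smul_inv_smul] at this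
  exact this hx

/-- A set with more than two points has a point outside any given pair. -/
theorem exists_third {A : Set X} (hA : 2 < A.encard) (a b : X) :
    ∃ x ∈ A, x ≠ a ∧ x ≠ b := by
  by_contra hc
  push Not at hc
  have : A ⊆ {a, b} := by
    intro x hx
    by_cases h : x = a
    · exact Or.inl h
    · exact Or.inr (hc x hx h)
  have h2 : ({a, b} : Set X).encard ≤ 2 := by
    refine (encard_insert_le {b} a).trans ?_
    rw [encard_singleton]
    norm_num
  exact absurd ((encard_le_encard this).trans h2) (not_le.2 hA)

variable {𝓐 : Set (Set X)}

/-- By nullness, translates that keep meeting neighborhoods of `p` either shrink to `p`, or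
one and the same set through `p` occurs infinitely often among them. -/
theorem collapse_or_const (h : IsLocalConvPairing G 𝓐) {g : ℕ → G} {E : Set X}
    (hE : E ∈ 𝓐) {p : X} (hm : MeetsAt g E p) :
    CollapsesTo g E p ∨ ∃ F, p ∈ F ∧ ∃ᶠ i in atTop, g i • E = F := by
  by_contra hcon
  push Not at hcon
  obtain ⟨h1, h2⟩ := hcon
  unfold CollapsesTo at h1
  push Not at h1
  obtain ⟨U, hU, hpU, hfr⟩ := h1
  obtain ⟨ε, hε, hball⟩ := Metric.isOpen_iff.1 hU p hpU
  have hfr2 : ∃ᶠ i in atTop, g i • E ∈ {A ∈ 𝓐 | ε / 4 < Metric.diam A} := by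
    have := hm (Metric.ball p (ε / 2)) Metric.isOpen_ball (Metric.mem_ball_self (by positivity))
    refine (hfr.and_eventually this).mono ?_
    rintro i ⟨hi1, ⟨y, hy, hyb⟩⟩
    refine ⟨h.invariant _ _ hE, ?_⟩
    obtain ⟨x, hx, hxU⟩ := not_subset.1 hi1
    have hxb : ε ≤ dist x p := by
      by_contra hlt
      exact hxU (hball (Metric.mem_ball.2 (not_le.1 hlt)))
    have hd : dist x y ≤ Metric.diam (g i • E) :=
      Metric.dist_le_diam_of_mem (Metric.isBounded_of_compactSpace) hx hy
    have := dist_triangle x y p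
    have := Metric.mem_ball.1 hyb
    linarith
  obtain ⟨F, hF, hFfr⟩ : ∃ F ∈ {A ∈ 𝓐 | ε / 4 < Metric.diam A},
      ∃ᶠ i in atTop, g i • E = F := by
    by_contra hno
    push Not at hno
    have hall := (Filter.eventually_all_finite (h.null (ε / 4) (by positivity))).2 hno
    obtain ⟨i, hi1, hi2⟩ := (hfr2.and_eventually hall).exists
    exact hi2 _ hi1 rfl
  refine hFfr (h2 F ?_)
  have hcl : IsClosed F := h.closed F hF.1
  by_contra hpF
  obtain ⟨i, hi1, y, hy1, hy2⟩ :=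
    (hFfr.and_eventually (hm Fᶜ hcl.isOpen_compl hpF)).exists
  exact hy2 (hi1 ▸ hy1)

theorem meets_of_pt {g : ℕ → G} {E : Set X} {p c : X} (hc : c ∈ E)
    (ht : Tendsto (fun i => g i • c) atTop (𝓝 p)) : MeetsAt g E p := by
  intro V hV hp
  filter_upwards [ht.eventually (hV.mem_nhds hp)] with i hi
  exact ⟨g i • c, smul_mem_smul_set hc, hi⟩

/-- If `E` separates two points both of which are carried to `p`, then the translates of `E`
enter every neighborhood of `p`: a connected neighborhood of `p` cannot be separated by a set
disjoint from it. -/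
theorem meets_of_sep [LocallyConnectedSpace X] {g : ℕ → G} {E : Set X} {p x y : X}
    (hs : SepPts E x y)
    (hx : Tendsto (fun i => g i • x) atTop (𝓝 p))
    (hy : Tendsto (fun i => g i • y) atTop (𝓝 p)) : MeetsAt g E p := by
  intro V hV hp
  have hW : IsOpen (connectedComponentIn V p) := hV.connectedComponentIn
  have hpW : p ∈ connectedComponentIn V p := mem_connectedComponentIn hp
  filter_upwards [hx.eventually (hW.mem_nhds hpW), hy.eventually (hW.mem_nhds hpW)] with i hi hj
  by_contra hne
  have hpre : IsPreconnected ((g i)⁻¹ • connectedComponentIn V p) :=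
    isPreconnected_connectedComponentIn.image _ (continuous_const_smul _).continuousOn
  have hsub : (g i)⁻¹ • connectedComponentIn V p ⊆ Eᶜ := by
    rintro _ ⟨z, hz, rfl⟩ hzE
    exact hne ⟨z, mem_smul_set_iff_inv_smul_mem.2 hzE, connectedComponentIn_subset _ _ hz⟩
  have hx' : x ∈ (g i)⁻¹ • connectedComponentIn V p :=
    mem_smul_set_iff_inv_smul_mem.2 (by rw [inv_inv]; exact hi)
  have hy' : y ∈ (g i)⁻¹ • connectedComponentIn V p :=
    mem_smul_set_iff_inv_smul_mem.2 (by rw [inv_inv]; exact hj)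
  exact hs.2.2 (connectedComponentIn_eq (hpre.subset_connectedComponentIn hx' hsub hy'))

theorem CollapsesTo.tendsto_pt {g : ℕ → G} {E : Set X} {p x : X} (h : CollapsesTo g E p)
    (hx : x ∈ E) : Tendsto (fun i => g i • x) atTop (𝓝 p) := by
  rw [tendsto_nhds]
  intro U hU hp
  filter_upwards [h U hU hp] with i hi
  exact hi (smul_mem_smul_set hx)

theorem meets_of_collapse [LocallyConnectedSpace X] {g : ℕ → G} {E F : Set X} {p : X}
    (hc : Crosses E F) (h : CollapsesTo g E p) : MeetsAt g F p := by
  rcases hc with ⟨c, hcE, hcF⟩ | ⟨-, hs, x, hx, y, hy, hne⟩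
  · exact meets_of_pt hcF (h.tendsto_pt hcE)
  · exact meets_of_sep ⟨hs hx, hs hy, hne⟩ (h.tendsto_pt hx) (h.tendsto_pt hy)

/-- The repeller is not isolated in `A`: otherwise the compact set `A \ {n}` would be carried
into arbitrarily small neighborhoods of `p`, leaving at most one point of `A` besides `p`. -/
theorem repeller_not_isolated {A : Set X} (hA : IsClosed A) (hbig : 2 < A.encard)
    {g : ℕ → G} (hg : ∀ i, g i ∈ stab G A) {n p : X}
    (h : ConvSeqOn A (fun i (x : X) => g i • x) n p) {O : Set X} (hO : IsOpen O)
    (hn : n ∈ O) : ∃ x ∈ A, x ∈ O ∧ x ≠ n := by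
  by_contra hc
  push Not at hc
  obtain ⟨u, hu, hup, -⟩ := exists_third hbig p p
  obtain ⟨v, hv, hvp, hvu⟩ := exists_third hbig p u
  obtain ⟨i, hi⟩ := (h.2.2 (A \ O) sdiff_subset (hA.isCompact.diff hO) (fun h => h.2 hn)
    {u, v}ᶜ (Set.toFinite {u, v}).isClosed.isOpen_compl
    (by rintro (h | h) <;> [exact hup h.symm; exact hvp h.symm])).exists
  have key : ∀ w ∈ A, (w = u ∨ w = v) → (g i)⁻¹ • w = n := by
    intro w hw hwu
    have hwA := stab_mem (stab_inv (hg i)) hw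
    by_contra hwn
    have := hi ⟨(g i)⁻¹ • w, ⟨hwA, fun hwO => hwn (hc _ hwA hwO)⟩, rfl⟩
    simp only [smul_inv_smul] at this
    exact this hwu
  have := (key u hu (Or.inl rfl)).trans (key v hv (Or.inr rfl)).symm
  exact hvu (smul_left_cancel _ this).symm

theorem meets_of_conv [LocallyConnectedSpace X] {A E : Set X} (hA : IsClosed A)
    (hbig : 2 < A.encard) (hE : IsClosed E)
    {g : ℕ → G} (hg : ∀ i, g i ∈ stab G A) {n p : X}
    (h : ConvSeqOn A (fun i (x : X) => g i • x) n p)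
    (hc : Crosses A E) (hn : n ∉ E) : MeetsAt g E p := by
  rcases hc with ⟨c, hcA, hcE⟩ | ⟨-, hs, x, hx, y, hy, hne⟩
  · exact meets_of_pt hcE (h.tendsto_pt hcA (fun hcn => hn (hcn ▸ hcE)))
  · -- a separated point equal to `n` is replaced by a nearby point of the same component
    have key : ∀ x ∈ A, ∃ x' ∈ A, x' ≠ n ∧
        connectedComponentIn Eᶜ x' = connectedComponentIn Eᶜ x := by
      intro x hx
      by_cases hxn : x = n
      · subst hxn
        obtain ⟨z, hzA, hzO, hzn⟩ := repeller_not_isolated hA hbig hg h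
          (hE.isOpen_compl.connectedComponentIn (x := x)) (mem_connectedComponentIn hn)
        exact ⟨z, hzA, hzn, (connectedComponentIn_eq hzO).symm⟩
      · exact ⟨x, hx, hxn, rfl⟩
    obtain ⟨x', hx', hxn, hxe⟩ := key x hx
    obtain ⟨y', hy', hyn, hye⟩ := key y hy
    exact meets_of_sep ⟨hs hx', hs hy', by rwa [hxe, hye]⟩ (h.tendsto_pt hx' hxn)
      (h.tendsto_pt hy' hyn)

/-- Collapsing to the attractor propagates along a crossing sequence issuing from `A`, as long
as its terms avoid the repeller and no term has infinitely often the same translate through the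
attractor. -/
theorem chain_collapse [LocallyConnectedSpace X] (h : IsLocalConvPairing G 𝓐) {A : Set X}
    (hA : A ∈ 𝓐) {g : ℕ → G} (hg : ∀ i, g i ∈ stab G A) {n p : X}
    (hconv : ConvSeqOn A (fun i (x : X) => g i • x) n p) {c : ℕ → Set X} {k : ℕ}
    (h0 : c 0 = A) (hc : ∀ j, 1 ≤ j → j ≤ k → c j ∈ 𝓐)
    (hcr : ∀ j < k, Crosses (c j) (c (j + 1)))
    (hn : ∀ j, 1 ≤ j → j ≤ k → n ∉ c j)
    (hp : ∀ j, 1 ≤ j → j ≤ k → ∀ F, p ∈ F → ¬ ∃ᶠ i in atTop, g i • c j = F) :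
    ∀ j, 1 ≤ j → j ≤ k → CollapsesTo g (c j) p := by
  intro j hj
  induction j, hj using Nat.le_induction with
  | base =>
    intro hk
    have hm := meets_of_conv (h.closed A hA) (h.big A hA) (h.closed _ (hc 1 le_rfl hk)) hg hconv
      (h0 ▸ hcr 0 (by omega)) (hn 1 le_rfl hk)
    rcases collapse_or_const h (hc 1 le_rfl hk) hm with h1 | ⟨F, hF, hfr⟩
    · exact h1
    · exact absurd hfr (hp 1 le_rfl hk F hF)
  | succ j hj ih =>
    intro hk
    have hm := meets_of_collapse (hcr j (by omega)) (ih (by omega))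
    rcases collapse_or_const h (hc (j + 1) (by omega) hk) hm with h1 | ⟨F, hF, hfr⟩
    · exact h1
    · exact absurd hfr (hp (j + 1) (by omega) hk F hF)

/-! ### Distinctness and loxodromic elements -/

/-- A convergence sequence has a subsequence of distinct elements. -/
theorem exists_inj_subseq {A : Set X} (hbig : 2 < A.encard) {g : ℕ → G} {n p : X}
    (h : ConvSeqOn A (fun i (x : X) => g i • x) n p) :
    ∃ k : ℕ → ℕ, StrictMono k ∧ Function.Injective (fun i => g (k i)) := by
  have hfin : ∀ e : G, ∀ᶠ i in atTop, g i ≠ e := by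
    intro e
    by_contra hfr
    have hfr : ∃ᶠ i in atTop, g i = e := by simpa [Filter.Frequently] using hfr
    obtain ⟨x, hx, hxn, -⟩ := exists_third hbig n n
    obtain ⟨y, hy, hyn, hyx⟩ := exists_third hbig n x
    have key : ∀ x ∈ A, x ≠ n → e • x = p := by
      intro x hx hxn
      by_contra hne
      obtain ⟨i, hi1, hi2⟩ := (hfr.and_eventually
        ((h.tendsto_pt hx hxn).eventually (isOpen_ne.mem_nhds (Ne.symm hne)))).exists
      exact hi2 (by rw [hi1])
    exact hyx (smul_left_cancel e ((key y hy hyn).trans (key x hx hxn).symm))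
  -- the indices at which a value occurs for the first time
  set s : Set ℕ := {i | ∀ j < i, g j ≠ g i} with hs
  have hinf : s.Infinite := by
    refine Set.infinite_of_forall_exists_gt fun M => ?_
    have : ∀ᶠ i in atTop, ∀ e ∈ g '' Set.Iic M, g i ≠ e :=
      (Filter.eventually_all_finite ((Set.finite_Iic M).image g)).2 fun e _ => hfin e
    obtain ⟨i, hi⟩ := this.exists
    classical
    have hex : ∃ j, g j = g i := ⟨i, rfl⟩
    refine ⟨Nat.find hex, ?_, ?_⟩
    · intro j hj
      rw [Nat.find_spec hex]
      exact Nat.find_min hex hj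
    · by_contra hle
      exact hi _ ⟨_, not_lt.1 hle, rfl⟩ (Nat.find_spec hex).symm
  refine ⟨Nat.nth (· ∈ s), Nat.nth_strictMono hinf, ?_⟩
  have hmem : ∀ i, Nat.nth (· ∈ s) i ∈ s := fun i => Nat.nth_mem_of_infinite hinf i
  intro a b hab
  by_contra hne
  rcases lt_or_gt_of_ne hne with hlt | hlt
  · exact hmem b _ (Nat.nth_strictMono hinf hlt) hab
  · exact hmem a _ (Nat.nth_strictMono hinf hlt) hab.symm

/-- Ping-pong: if the terms of a convergence sequence fix the attractor `c` and the repeller is a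
different point, then some term `φ` is loxodromic, that is, it has a second fixed point `r`, and
suitable powers of `φ` converge with repeller `r` and attractor `c`. -/
theorem exists_loxodromic {B : Set X} (hBc : IsClosed B) (hbig : 2 < B.encard)
    (hB : ConvGroupOn (stab G B) B)
    {f : ℕ → G} (hf : ∀ i, f i ∈ stab G B) {n c : X} (hne : n ≠ c)
    (hfix : ∀ i, f i • c = c)
    (h : ConvSeqOn B (fun i (x : X) => f i • x) n c) :
    ∃ (l : ℕ) (m : ℕ → ℕ) (r : X), r ≠ c ∧ f l • r = r ∧
      ConvSeqOn B (fun i (x : X) => (f l ^ m i) • x) r c := by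
  obtain ⟨z, hz, hzn, hzc⟩ := exists_third hbig n c
  obtain ⟨N₁, U₁, hN₁, hU₁, hnN₁, hcU₁, hd₁⟩ := t2_separation hne
  obtain ⟨N₂, W₂, hN₂, hW₂, hnN₂, hzW₂, hd₂⟩ := t2_separation hzn.symm
  obtain ⟨U₃, W₃, hU₃, hW₃, hcU₃, hzW₃, hd₃⟩ := t2_separation hzc.symm
  obtain ⟨l, hl⟩ := (h.2.2 (B \ (N₁ ∩ N₂)) sdiff_subset (hBc.isCompact.diff (hN₁.inter hN₂))
    (fun h => h.2 ⟨hnN₁, hnN₂⟩) (U₁ ∩ U₃) (hU₁.inter hU₃) ⟨hcU₁, hcU₃⟩).exists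
  set φ := f l with hφ
  have hφB : φ ∈ stab G B := hf l
  have hφc : φ • c = c := hfix l
  have hstep : ∀ x ∈ B, x ∉ N₁ ∩ N₂ → φ • x ∈ U₁ ∩ U₃ := fun x hx hxN => hl ⟨x, ⟨hx, hxN⟩, rfl⟩
  have hpow : ∀ m : ℕ, ∀ x ∈ B, x ∉ N₁ ∩ N₂ → φ ^ (m + 1) • x ∈ U₁ ∩ U₃ := by
    intro m
    induction m with
    | zero => intro x hx hxN; simpa using hstep x hx hxN
    | succ m ih =>
      intro x hx hxN
      rw [pow_succ', mul_smul]
      refine hstep _ (stab_mem (stab_pow hφB _) hx) ?_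
      intro hN
      exact disjoint_left.1 hd₁ hN.1 (ih x hx hxN).1
  have hzN : z ∉ N₁ ∩ N₂ := fun hN => disjoint_left.1 hd₂ hN.2 hzW₂
  have hinj : Function.Injective (fun m : ℕ => φ ^ m) := by
    have key : ∀ a b : ℕ, a < b → φ ^ a ≠ φ ^ b := by
      intro a b hab he
      obtain ⟨d, rfl⟩ := Nat.exists_eq_add_of_lt hab
      have h1 : φ ^ (d + 1) = 1 := by
        rw [add_assoc, pow_add] at he
        exact (mul_eq_left.1 he.symm)
      have := hpow d z hz hzN
      rw [h1, one_smul] at this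
      exact disjoint_left.1 hd₃ this.2 hzW₃
    intro a b hab
    by_contra hne
    rcases lt_or_gt_of_ne hne with hlt | hlt
    · exact key _ _ hlt hab
    · exact key _ _ hlt hab.symm
  obtain ⟨m, hm, r, a, hra⟩ := hB (fun m => φ ^ m) (fun m => stab_pow hφB m) hinj
  have hmS : ∀ i, φ ^ m i ∈ stab G B := fun i => stab_pow hφB _
  have hinv := conv_inv hBc hmS hra
  have hm1 : ∀ᶠ i in atTop, 1 ≤ m i := hm.tendsto_atTop.eventually_ge_atTop 1
  have hcfix : ∀ i, φ ^ i • c = c := by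
    intro i
    induction i with
    | zero => simp
    | succ i ih => rw [pow_succ, mul_smul, hφc, ih]
  have hcB : c ∈ B := h.2.1
  have hcr : c ≠ r := by
    intro hcr
    have hza : z ≠ a := by
      intro hza
      have ht := hra.tendsto_pt hz (hcr ▸ hzc)
      obtain ⟨i, hi, hi1⟩ := ((ht.eventually (hW₃.mem_nhds (hza ▸ hzW₃))).and hm1).exists
      obtain ⟨d, hd⟩ := Nat.exists_eq_add_of_le' hi1
      have := hpow d z hz hzN
      rw [← hd] at this
      exact disjoint_left.1 hd₃ this.2 hi
    have ht := hinv.tendsto_pt hz hza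
    rw [← hcr] at ht
    obtain ⟨i, hi, hi1⟩ := ((ht.eventually (hU₁.mem_nhds hcU₁)).and hm1).exists
    obtain ⟨d, hd⟩ := Nat.exists_eq_add_of_le' hi1
    have hnot : (φ ^ m i)⁻¹ • z ∉ N₁ ∩ N₂ := fun hN => disjoint_left.1 hd₁ hN.1 hi
    have := hpow d _ (stab_mem (stab_inv (hmS i)) hz) hnot
    rw [← hd, smul_inv_smul] at this
    exact disjoint_left.1 hd₃ this.2 hzW₃
  have hac : a = c := by
    have ht := hra.tendsto_pt hcB hcr
    simp only [hcfix] at ht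
    exact (tendsto_nhds_unique ht tendsto_const_nhds)
  rw [hac] at hra hinv
  refine ⟨l, m, r, hcr.symm, ?_, hra⟩
  -- `φ⁻¹` commutes with the powers of `φ`, so it fixes the attractor of the inverse powers
  have hzc' : φ⁻¹ • z ≠ c := by
    intro he
    rw [inv_smul_eq_iff, hφc] at he
    exact hzc he
  have t1 := hinv.tendsto_pt (stab_mem (stab_inv hφB) hz) hzc'
  have t2 := (hinv.tendsto_pt hz hzc).const_smul φ⁻¹
  have hcomm : ∀ i, (φ ^ m i)⁻¹ • φ⁻¹ • z = φ⁻¹ • (φ ^ m i)⁻¹ • z := by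
    intro i
    rw [← mul_smul, ← mul_smul, ← mul_inv_rev, ← mul_inv_rev, ← pow_succ, ← pow_succ']
  simp only [hcomm] at t1
  exact (inv_smul_eq_iff.1 (tendsto_nhds_unique t2 t1)).symm

/-! ### Common stabilizers of intersecting members -/

theorem inter_stab {A B : Set X} {g : G} (hgA : g ∈ stab G A) (hgB : g ∈ stab G B) {x : X}
    (hx : x ∈ A ∩ B) : g • x ∈ A ∩ B :=
  ⟨stab_mem hgA hx.1, stab_mem hgB hx.2⟩

/-- If `A ∩ B = {c}` and a sequence stabilizing both sets converges on `B` with attractor `c`, then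
`c` is also the repeller: otherwise there is a loxodromic element in both stabilizers, and a crossing
sequence avoiding its two fixed points shows that `A` contains the second one as well. -/
theorem no_loxodromic [LocallyConnectedSpace X] (h : IsLocalConvPairing G 𝓐) {A B : Set X}
    (hA : A ∈ 𝓐) (hB : B ∈ 𝓐) {c : X} (hAB : A ∩ B = {c})
    {f : ℕ → G} (hfA : ∀ i, f i ∈ stab G A) (hfB : ∀ i, f i ∈ stab G B) {n : X}
    (hconv : ConvSeqOn B (fun i (x : X) => f i • x) n c) : n = c := by
  by_contra hne
  have hfix : ∀ i, f i • c = c := by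
    intro i
    have := inter_stab (hfA i) (hfB i) (x := c) (by rw [hAB]; rfl)
    rw [hAB] at this
    exact this
  obtain ⟨l, m, r, hrc, hr, hF⟩ := exists_loxodromic (h.closed B hB) (h.big B hB)
    (h.stabConv B hB) hfB hne hfix hconv
  have hFi := conv_inv (h.closed B hB) (fun i => stab_pow (hfB l) (m i)) hF
  have hrfix : ∀ i : ℕ, f l ^ i • r = r := by
    intro i
    induction i with
    | zero => simp
    | succ i ih => rw [pow_succ, mul_smul, hr, ih]
  obtain ⟨k, hk, d, hd0, hdk, hdm, hdc, hdD⟩ :=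
    (h.connect A hA B hB (by rw [hAB, encard_singleton]; norm_num)).1 c hAB r hF.1 hrc
  have hav : ∀ j, 1 ≤ j → j ≤ k → r ∉ d j ∧ c ∉ d j := by
    intro j h1 h2
    have hdis := disjoint_left.1 (disjoint_iff_inter_eq_empty.2 (hdD j h1 h2))
    exact ⟨fun hx => hdis hx (by simp), fun hx => hdis hx (by simp)⟩
  have hcol := chain_collapse h hB (fun i => stab_inv (stab_pow (hfB l) (m i))) hFi
    (c := fun j => d (k + 1 - j)) (k := k) (by simpa using hdk)
    (fun j _ _ => hdm _ (by omega))
    (fun j hj => by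
      have := (hdc (k - j) (by omega)).symm'
      have e1 : k - j + 1 = k + 1 - j := by omega
      have e2 : k - j = k + 1 - (j + 1) := by omega
      rw [e1] at this
      rw [← e2]
      exact this)
    (fun j h1 h2 => (hav (k + 1 - j) (by omega) (by omega)).2)
    (by
      intro j h1 h2 F hrF hfr
      obtain ⟨i, hi⟩ := hfr.exists
      rw [← hi, mem_smul_set_iff_inv_smul_mem, inv_inv, hrfix] at hrF
      exact (hav (k + 1 - j) (by omega) (by omega)).1 hrF)
    k hk le_rfl
  have e1 : k + 1 - k = 1 := by omega
  simp only [e1] at hcol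
  have hm := meets_of_collapse (hd0 ▸ hdc 0 (by omega) : Crosses A (d 1)).symm' hcol
  have hrA : r ∈ A := by
    by_contra hrA
    obtain ⟨i, y, hy1, hy2⟩ := (hm Aᶜ (h.closed A hA).isOpen_compl hrA).exists
    have : (f l ^ m i)⁻¹ • A = A := stab_inv (stab_pow (hfA l) (m i))
    rw [this] at hy1
    exact hy2 hy1
  have : r ∈ A ∩ B := ⟨hrA, hF.1⟩
  rw [hAB] at this
  exact hrc this

theorem attractor_eq_of_singleton [LocallyConnectedSpace X] (h : IsLocalConvPairing G 𝓐)
    {A B : Set X} (hA : A ∈ 𝓐) (hB : B ∈ 𝓐) {c : X} (hAB : A ∩ B = {c})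
    {f : ℕ → G} (hfA : ∀ i, f i ∈ stab G A) (hfB : ∀ i, f i ∈ stab G B) {n p : X}
    (hconv : ConvSeqOn B (fun i (x : X) => f i • x) n p) : p = c := by
  have hcAB : c ∈ A ∩ B := by rw [hAB]; rfl
  by_cases hn : c = n
  · subst hn
    exact no_loxodromic h hA hB hAB (fun i => stab_inv (hfA i)) (fun i => stab_inv (hfB i))
      (conv_inv (h.closed B hB) hfB hconv)
  · have ht := hconv.tendsto_pt hcAB.2 hn
    have hfix : ∀ i, f i • c = c := by
      intro i
      have := inter_stab (hfA i) (hfB i) hcAB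
      rw [hAB] at this
      exact this
    simp only [hfix] at ht
    exact tendsto_nhds_unique ht tendsto_const_nhds

theorem attractor_eq [LocallyConnectedSpace X] (h : IsLocalConvPairing G 𝓐)
    {A B : Set X} (hA : A ∈ 𝓐) (hB : B ∈ 𝓐) (hAB : (A ∩ B).Nonempty)
    {f : ℕ → G} (hfA : ∀ i, f i ∈ stab G A) (hfB : ∀ i, f i ∈ stab G B) {n p n' p' : X}
    (h1 : ConvSeqOn A (fun i (x : X) => f i • x) n p)
    (h2 : ConvSeqOn B (fun i (x : X) => f i • x) n' p') : p = p' := by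
  by_cases hbig : 2 < (A ∩ B).encard
  · obtain ⟨x, hx, hxn, hxn'⟩ := exists_third hbig n n'
    exact tendsto_nhds_unique (h1.tendsto_pt hx.1 hxn) (h2.tendsto_pt hx.2 hxn')
  have hcon := h.connect A hA B hB (not_lt.1 hbig)
  by_cases hsing : ∃ c, A ∩ B = {c}
  · obtain ⟨c, hc⟩ := hsing
    rw [attractor_eq_of_singleton h hA hB hc hfA hfB h2,
      attractor_eq_of_singleton h hB hA (by rwa [inter_comm]) hfB hfA h1]
  obtain ⟨k, hk, d, hd0, hdk, hdm, hdc, hdD⟩ := hcon.2 hsing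
  have hcl : IsClosed (A ∩ B) := (h.closed A hA).inter (h.closed B hB)
  -- with at least two points, the invariant set `A ∩ B` contains attractor and repeller
  have hrep : ∀ (E : Set X) (f : ℕ → G), A ∩ B ⊆ E → (∀ i, f i ∈ stab G A) →
      (∀ i, f i ∈ stab G B) → ∀ n p, ConvSeqOn E (fun i (x : X) => f i • x) n p →
      p ∈ A ∩ B := by
    intro E f hE hfA hfB n p hE2
    obtain ⟨x, hx, hxn⟩ : ∃ x ∈ A ∩ B, x ≠ n := by
      by_contra hno
      push Not at hno
      exact hsing ⟨n, hAB.subset_singleton_iff.1 hno⟩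
    exact hcl.mem_of_tendsto (hE2.tendsto_pt (hE hx) hxn)
      (Eventually.of_forall fun i => inter_stab (hfA i) (hfB i) hx)
  have hpm := hrep A f inter_subset_left hfA hfB n p h1
  have hpm' := hrep B f inter_subset_right hfA hfB n' p' h2
  have hnm := hrep A _ inter_subset_left (fun i => stab_inv (hfA i)) (fun i => stab_inv (hfB i))
    p n (conv_inv (h.closed A hA) hfA h1)
  have hnm' := hrep B _ inter_subset_right (fun i => stab_inv (hfA i)) (fun i => stab_inv (hfB i))
    p' n' (conv_inv (h.closed B hB) hfB h2)
  have hav : ∀ j, 1 ≤ j → j ≤ k → ∀ x ∈ A ∩ B, x ∉ d j := by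
    intro j h1 h2 x hx hxd
    exact (hdD j h1 h2 ▸ (⟨hxd, hx⟩ : x ∈ d j ∩ (A ∩ B)) : x ∈ (∅ : Set X))
  have hnc : ∀ q ∈ A ∩ B, ∀ j, 1 ≤ j → j ≤ k → ∀ F, q ∈ F →
      ¬ ∃ᶠ i in atTop, f i • d j = F := by
    intro q hq j h1 h2 F hqF hfr
    obtain ⟨i, hi⟩ := hfr.exists
    rw [← hi, mem_smul_set_iff_inv_smul_mem] at hqF
    exact hav j h1 h2 _ (inter_stab (stab_inv (hfA i)) (stab_inv (hfB i)) hq) hqF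
  -- the last intermediate term collapses to both attractors
  have c1 := chain_collapse h hA hfA h1 (c := d) (k := k) hd0 (fun j _ _ => hdm j (by omega))
    (fun j hj => hdc j (by omega)) (fun j a b => hav j a b n hnm) (hnc p hpm) k hk le_rfl
  have hdkm : d k ∈ 𝓐 := hdm k (by omega)
  have hm2 := meets_of_conv (h.closed B hB) (h.big B hB) (h.closed _ hdkm) hfB h2
    (hdk ▸ hdc k le_rfl : Crosses (d k) B).symm' (hav k hk le_rfl n' hnm')
  have c2 : CollapsesTo f (d k) p' := by
    rcases collapse_or_const h hdkm hm2 with h1 | ⟨F, hF, hfr⟩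
    · exact h1
    · exact absurd hfr (hnc p' hpm' k hk le_rfl F hF)
  obtain ⟨x, hx, -⟩ := exists_third (h.big _ hdkm) p p
  exact tendsto_nhds_unique (c1.tendsto_pt hx) (c2.tendsto_pt hx)

/-- If a member meeting `A` has infinitely often the same translate, then it contains the
repeller, and a subsequence converges on it with the same repeller and attractor as on `A`. -/
theorem attract_of_const [LocallyConnectedSpace X] (h : IsLocalConvPairing G 𝓐)
    {A B : Set X} (hA : A ∈ 𝓐) (hB : B ∈ 𝓐) (hAB : (A ∩ B).Nonempty)
    {g : ℕ → G} (hg : ∀ i, g i ∈ stab G A) {n p : X}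
    (hconv : ConvSeqOn A (fun i (x : X) => g i • x) n p)
    {F : Set X} (hfr : ∃ᶠ i in atTop, g i • B = F) :
    n ∈ B ∧ ∃ k : ℕ → ℕ, StrictMono k ∧ ∀ C : Set X, C ⊆ B → IsCompact C → n ∉ C →
      ∀ U : Set X, IsOpen U → p ∈ U → ∀ᶠ i in atTop, g (k i) • C ⊆ U := by
  obtain ⟨φ, hφ, hφF⟩ := extraction_of_frequently_atTop hfr
  set γ := g (φ 0) with hγ
  have hγA : γ ∈ stab G A := hg _
  have hfconv : ConvSeqOn A (fun i (x : X) => (γ⁻¹ * g (φ i)) • x) n (γ⁻¹ • p) := by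
    refine ⟨hconv.1, stab_mem (stab_inv hγA) hconv.2.1, ?_⟩
    intro C hC hCc hnC U hU hpU
    filter_upwards [hφ.tendsto_atTop.eventually (hconv.2.2 C hC hCc hnC (γ • U) (hU.smul γ)
      (mem_smul_set_iff_inv_smul_mem.2 hpU))] with i hi
    rintro _ ⟨x, hx, rfl⟩
    have := hi ⟨x, hx, rfl⟩
    rw [mem_smul_set_iff_inv_smul_mem] at this
    simpa [mul_smul] using this
  have hfA : ∀ i, γ⁻¹ * g (φ i) ∈ stab G A := fun i => stab_mul (stab_inv hγA) (hg _)
  have hfB : ∀ i, γ⁻¹ * g (φ i) ∈ stab G B := by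
    intro i
    change (γ⁻¹ * g (φ i)) • B = B
    rw [mul_smul, hφF i, inv_smul_eq_iff]
    exact (hφF 0).symm
  obtain ⟨ψ, hψ, hinj⟩ := exists_inj_subseq (h.big A hA) hfconv
  obtain ⟨κ, hκ, n', p', hB'⟩ := h.stabConv B hB _ (fun i => hfB (ψ i)) hinj
  have hA' := (hfconv.subseq hψ).subseq hκ
  have hp := attractor_eq h hA hB hAB (fun i => hfA (ψ (κ i))) (fun i => hfB (ψ (κ i))) hA' hB'
  have hn := attractor_eq h hA hB hAB (fun i => stab_inv (hfA (ψ (κ i))))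
    (fun i => stab_inv (hfB (ψ (κ i))))
    (conv_inv (h.closed A hA) (fun i => hfA (ψ (κ i))) hA')
    (conv_inv (h.closed B hB) (fun i => hfB (ψ (κ i))) hB')
  subst hn
  refine ⟨hB'.1, fun i => φ (ψ (κ i)), hφ.comp (hψ.comp hκ), ?_⟩
  intro C hC hCc hnC U hU hpU
  filter_upwards [hB'.2.2 C hC hCc hnC (γ⁻¹ • U) (hU.smul γ⁻¹)
    (by rw [← hp]; exact smul_mem_smul_set hpU)] with i hi
  rintro _ ⟨x, hx, rfl⟩
  have := hi ⟨x, hx, rfl⟩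
  rw [mem_smul_set_iff_inv_smul_mem] at this
  simpa [mul_smul] using this

end

/-- Lemma: if `(g_i) ⊆ st(A)` acts as a convergence sequence on `A` with attractor `p`
and repeller `n`, and `A ∩ B ≠ ∅`, then a subsequence attracts every compact subset of
`B \ {n}` to `p`. -/
theorem attract_adjacent {G X : Type*} [Group G] [MulAction G X]
    [MetricSpace X] [CompactSpace X] [ConnectedSpace X] [LocallyConnectedSpace X]
    [ContinuousConstSMul G X]
    (hcut : ∀ x : X, IsPreconnected ({x}ᶜ : Set X))
    (𝓐 : Set (Set X)) (h : IsLocalConvPairing G 𝓐)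
    (A B : Set X) (hA : A ∈ 𝓐) (hB : B ∈ 𝓐) (hAB : (A ∩ B).Nonempty)
    (g : ℕ → G) (hg : ∀ i, g i ∈ stab G A) (n p : X)
    (hconv : ConvSeqOn A (fun i (x : X) => g i • x) n p) :
    ∃ k : ℕ → ℕ, StrictMono k ∧ ∀ C : Set X, C ⊆ B → IsCompact C → n ∉ C →
      ∀ U : Set X, IsOpen U → p ∈ U → ∀ᶠ i in atTop, g (k i) • C ⊆ U := by
  by_cases hfr : ∃ F, ∃ᶠ i in atTop, g i • B = F
  · obtain ⟨F, hF⟩ := hfr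
    exact (attract_of_const h hA hB hAB hg hconv hF).2
  -- otherwise the translates of `B` are null, and it suffices that they come close to `p`
  suffices hm : MeetsAt g B p by
    rcases collapse_or_const h hB hm with hcol | ⟨F, -, hF⟩
    · refine ⟨id, strictMono_id, fun C hC _ _ U hU hp => ?_⟩
      filter_upwards [hcol U hU hp] with i hi
      exact (smul_set_mono hC).trans hi
    · exact absurd ⟨F, hF⟩ hfr
  by_cases hc : ∃ c ∈ A ∩ B, c ≠ n
  · obtain ⟨c, hc, hcn⟩ := hc
    exact meets_of_pt hc.2 (hconv.tendsto_pt hc.1 hcn)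
  push Not at hc
  have hsing : A ∩ B = {n} := hAB.subset_singleton_iff.1 hc
  obtain ⟨b, hb, hbn, -⟩ := exists_third (h.big B hB) n n
  obtain ⟨k, hk, d, hd0, hdk, hdm, hdc, hdD⟩ :=
    (h.connect A hA B hB (by rw [hsing, encard_singleton]; norm_num)).1 n hsing b hb hbn
  have hav : ∀ j, 1 ≤ j → j ≤ k → n ∉ d j := by
    intro j h1 h2 hx
    exact (hdD j h1 h2 ▸ (⟨hx, by simp⟩ : n ∈ d j ∩ {b, n}) : n ∈ (∅ : Set X))
  have hcol := chain_collapse h hA hg hconv (c := d) (k := k) hd0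
    (fun j _ _ => hdm j (by omega)) (fun j hj => hdc j (by omega)) hav
    (by
      intro j h1 h2 F hpF hF
      obtain ⟨i, hi⟩ := hF.exists
      -- a recurring translate through `p` makes `d j` meet `A`, hence contain the repeller
      have hne : (A ∩ d j).Nonempty := by
        refine ⟨(g i)⁻¹ • p, stab_mem (stab_inv (hg i)) hconv.2.1, ?_⟩
        rw [← mem_smul_set_iff_inv_smul_mem, hi]
        exact hpF
      exact hav j h1 h2 (attract_of_const h hA (hdm j (by omega)) hne hg hconv hF).1)
    k hk le_rfl
  exact meets_of_collapse (hdk ▸ hdc k le_rfl : Crosses (d k) B) hcol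
end

section
/- Let (G, 𝓐) be a local convergence pairing on a Peano continuum X without cut points and let A, B ∈ 𝓐. If (g_i) ⊆ st(A) acts as a convergence sequence on A with attractor p and repeller n, then there exists a subsequence (h_i) of (g_i) such that for every compact C ⊆ B \ {n} and every open neighborhood U of p, h_i(C) ⊆ U for all sufficiently large i. -/
/-!
Pass to a subsequence of distinct elements that is tame on every member `C` of the countable
family, for the elements and for their inverses (`exists_tame`, `exists_diagonal`). So either the
images of `C` shrink to a point `att C`, or `C` is stable: the images are eventually a fixed set
`im C`, and the sequence is a convergence sequence on `C` with repeller `rep C` and attractor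
`att C ∈ im C`. On stable sets the inverses attract `im C` minus `att C` to `rep C`.

The core is that all members have the same attractor (`Dyn.att_eq`). Crossing sequences join any
two members, so it suffices to treat crossing sets `C`, `D`.
* If they separate each other, a small connected neighbourhood of one attractor meets the images
  of the other set, which forces equality (`Dyn.att_eq_of_sep`).
* If they meet in a point that is not a repeller, the orbit of that point has both limits.
  Otherwise they meet in at most the two repellers, and the crossing sequences that avoid
  prescribed points apply. They rule out different attractors for stable sets with different
  repellers (`Dyn.att_eq_of_rep_ne`) and for a stable and a shrinking set
  (`Dyn.att_eq_of_stable_shrink`).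
* There remain stable sets meeting exactly in a common repeller `r` (`Dyn.att_eq_of_crosses`).
  A crossing sequence from `C` to `D` that avoids `r` and a point `b` of `D` contains a stable
  set with attractor `att D` and a repeller other than `r`. It meets `D` in a point other than
  `b` that is eventually mapped to `att D`. Using this point as a new `b` gives two distinct
  points with the same image.

So `B` has attractor `p`. The same result for the inverse sequence shows that, if `B` is stable,
its repeller is `n`.
-/

open Set Filter Topology Pointwise

/-! ### Tame sequences and their attractors -/

section Dynamics

variable {G X : Type*} [Group G] [MulAction G X] [MetricSpace X]

/-- Along the filter `l` the maps `g i` are tame on `C`: either the images `g i • C` shrink to a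
point `z`, or they are eventually equal to a fixed set `C'` and the `g i` act on `C` as a
convergence sequence with repeller `r ∈ C` and attractor `a ∈ C'`. -/
def Tame (g : ℕ → G) (l : Filter ℕ) (C : Set X) : Prop :=
  (∃ z : X, ∀ U ∈ 𝓝 z, ∀ᶠ i in l, g i • C ⊆ U) ∨
  (∃ (C' : Set X) (r a : X), (∀ᶠ i in l, g i • C = C') ∧ r ∈ C ∧ a ∈ C' ∧
    ∀ K ⊆ C, IsCompact K → r ∉ K → ∀ U ∈ 𝓝 a, ∀ᶠ i in l, g i • K ⊆ U)

/-- A choice of the data witnessing that every member of `𝓐` is tame: `stable C` says that the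
images of `C` are eventually equal to `im C`, with repeller `rep C`; otherwise they shrink. In
both cases `att C` is the attracting point. -/
structure Dyn (g : ℕ → G) (l : Filter ℕ) (𝓐 : Set (Set X)) (stable : Set X → Prop)
    (im : Set X → Set X) (rep att : Set X → X) : Prop where
  shrink : ∀ C ∈ 𝓐, ¬ stable C → ∀ U ∈ 𝓝 (att C), ∀ᶠ i in l, g i • C ⊆ U
  im_eq : ∀ C ∈ 𝓐, stable C → ∀ᶠ i in l, g i • C = im C
  rep_mem : ∀ C ∈ 𝓐, stable C → rep C ∈ C
  att_mem : ∀ C ∈ 𝓐, stable C → att C ∈ im C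
  conv : ∀ C ∈ 𝓐, stable C → ∀ K ⊆ C, IsCompact K → rep C ∉ K →
    ∀ U ∈ 𝓝 (att C), ∀ᶠ i in l, g i • K ⊆ U

lemma encard_pair_le' {Y : Type*} (a b : Y) : ({a, b} : Set Y).encard ≤ 2 := by
  refine (encard_insert_le _ _).trans ?_
  rw [encard_singleton]
  norm_num

lemma exists_mem_ne_ne {X : Type*} {C : Set X} (hC : 2 < C.encard) (a b : X) :
    ∃ x ∈ C, x ≠ a ∧ x ≠ b := by
  by_contra hcon
  push Not at hcon
  have hsub : C ⊆ {a, b} := fun x hx => by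
    by_cases hxa : x = a
    · exact Or.inl hxa
    · exact Or.inr (hcon x hx hxa)
  exact absurd (hC.trans_le ((encard_le_encard hsub).trans (encard_pair_le' a b))) (lt_irrefl _)

lemma Tame.mono {g : ℕ → G} {l l' : Filter ℕ} (hl : l' ≤ l) {C : Set X} (hC : Tame g l C) :
    Tame g l' C := by
  rcases hC with ⟨z, hz⟩ | ⟨C', r, a, h1, h2, h3, h4⟩
  · exact Or.inl ⟨z, fun U hU => (hz U hU).filter_mono hl⟩
  · exact Or.inr ⟨C', r, a, h1.filter_mono hl, h2, h3,
      fun K hK hKc hr U hU => (h4 K hK hKc hr U hU).filter_mono hl⟩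

lemma exists_dyn {g : ℕ → G} {l : Filter ℕ} {𝓐 : Set (Set X)} [Nonempty X]
    (ht : ∀ C ∈ 𝓐, Tame g l C) :
    ∃ stable im rep att, Dyn g l 𝓐 stable im rep att := by
  classical
  have key : ∀ C : Set X, ∃ (s : Prop) (C' : Set X) (r a : X), C ∈ 𝓐 →
      (¬ s → ∀ U ∈ 𝓝 a, ∀ᶠ i in l, g i • C ⊆ U) ∧
      (s → (∀ᶠ i in l, g i • C = C') ∧ r ∈ C ∧ a ∈ C' ∧
        ∀ K ⊆ C, IsCompact K → r ∉ K → ∀ U ∈ 𝓝 a, ∀ᶠ i in l, g i • K ⊆ U) := by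
    intro C
    by_cases hC : C ∈ 𝓐
    · rcases ht C hC with ⟨z, hz⟩ | ⟨C', r, a, hh⟩
      · exact ⟨False, ∅, z, z, fun _ => ⟨fun _ => hz, fun hf => hf.elim⟩⟩
      · exact ⟨True, C', r, a, fun _ => ⟨fun hf => (hf trivial).elim, fun _ => hh⟩⟩
    · exact ⟨True, ∅, Classical.arbitrary X, Classical.arbitrary X, fun hf => (hC hf).elim⟩
  choose stable im rep att hh using key
  exact ⟨stable, im, rep, att, fun C hC => (hh C hC).1, fun C hC hs => ((hh C hC).2 hs).1,
    fun C hC hs => ((hh C hC).2 hs).2.1, fun C hC hs => ((hh C hC).2 hs).2.2.1,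
    fun C hC hs => ((hh C hC).2 hs).2.2.2⟩

/-- On a set stabilised by a convergence sequence, the inverses attract to the repeller. -/
lemma tendsto_inv_of_conv [CompactSpace X] {g : ℕ → G} {l : Filter ℕ} {C C' : Set X} {r a : X}
    (hcl : IsClosed C) (him : ∀ᶠ i in l, g i • C = C')
    (hconv : ∀ K ⊆ C, IsCompact K → r ∉ K → ∀ U ∈ 𝓝 a, ∀ᶠ i in l, g i • K ⊆ U)
    {y : X} (hy : y ∈ C') (hya : y ≠ a) : Tendsto (fun i => (g i)⁻¹ • y) l (𝓝 r) := by
  rw [tendsto_nhds]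
  intro U hU hr
  have h1 := hconv (C \ U) sdiff_subset (hcl.sdiff hU).isCompact (fun hh => hh.2 hr)
    {y}ᶜ (isOpen_compl_singleton.mem_nhds hya.symm)
  filter_upwards [h1, him] with i hi hi'
  by_contra hn
  have hm : (g i)⁻¹ • y ∈ C := by
    rw [← mem_smul_set_iff_inv_smul_mem, hi']; exact hy
  exact hi (mem_smul_set_iff_inv_smul_mem.2 ⟨hm, hn⟩) rfl

section

variable {𝓐 : Set (Set X)} {g : ℕ → G} {l : Filter ℕ} {stable : Set X → Prop}
  {im : Set X → Set X} {rep att : Set X → X}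

lemma Dyn.tendsto (d : Dyn g l 𝓐 stable im rep att) {C : Set X} (hC : C ∈ 𝓐) {x : X}
    (hx : x ∈ C) (hr : stable C → x ≠ rep C) : Tendsto (fun i => g i • x) l (𝓝 (att C)) := by
  rw [tendsto_nhds]
  intro U hU ha
  by_cases hs : stable C
  · filter_upwards [d.conv C hC hs {x} (singleton_subset_iff.2 hx) isCompact_singleton
      (fun hh => hr hs hh.symm) U (hU.mem_nhds ha)] with i hi
    exact hi (smul_mem_smul_set rfl)
  · filter_upwards [d.shrink C hC hs U (hU.mem_nhds ha)] with i hi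
    exact hi (smul_mem_smul_set hx)

lemma Dyn.tendsto_inv [CompactSpace X] (d : Dyn g l 𝓐 stable im rep att)
    (h : IsLocalConvPairing G 𝓐) {C : Set X} (hC : C ∈ 𝓐) (hs : stable C) {y : X}
    (hy : y ∈ im C) (hya : y ≠ att C) : Tendsto (fun i => (g i)⁻¹ • y) l (𝓝 (rep C)) :=
  tendsto_inv_of_conv (h.closed C hC) (d.im_eq C hC hs) (d.conv C hC hs) hy hya

lemma Dyn.im_mem [l.NeBot] (d : Dyn g l 𝓐 stable im rep att) (h : IsLocalConvPairing G 𝓐)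
    {C : Set X} (hC : C ∈ 𝓐) (hs : stable C) : im C ∈ 𝓐 := by
  obtain ⟨i, hi⟩ := (d.im_eq C hC hs).exists
  exact hi ▸ h.invariant (g i) C hC

/-- Limits of orbits of points of a stable set lie in its image. -/
lemma Dyn.lim_mem_im [l.NeBot] (d : Dyn g l 𝓐 stable im rep att) (h : IsLocalConvPairing G 𝓐)
    {C : Set X} (hC : C ∈ 𝓐) (hs : stable C) {x z : X} (hx : x ∈ C)
    (hz : Tendsto (fun i => g i • x) l (𝓝 z)) : z ∈ im C := by
  refine (h.closed _ (d.im_mem h hC hs)).mem_of_tendsto hz ?_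
  filter_upwards [d.im_eq C hC hs] with i hi
  exact hi ▸ smul_mem_smul_set hx

lemma Dyn.inter_im (d : Dyn g l 𝓐 stable im rep att) {C D : Set X} (hC : C ∈ 𝓐) (hD : D ∈ 𝓐)
    (hsC : stable C) (hsD : stable D) : ∀ᶠ i in l, g i • (C ∩ D) = im C ∩ im D := by
  filter_upwards [d.im_eq C hC hsC, d.im_eq D hD hsD] with i h1 h2
  rw [smul_set_inter, h1, h2]

lemma Dyn.inter_nonempty [l.NeBot] (d : Dyn g l 𝓐 stable im rep att) {C D : Set X} (hC : C ∈ 𝓐)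
    (hD : D ∈ 𝓐) (hsC : stable C) (hsD : stable D) {y : X} (h1 : y ∈ im C) (h2 : y ∈ im D) :
    (C ∩ D).Nonempty := by
  obtain ⟨i, hi⟩ := (d.inter_im hC hD hsC hsD).exists
  have : y ∈ g i • (C ∩ D) := by rw [hi]; exact ⟨h1, h2⟩
  exact ⟨_, mem_smul_set_iff_inv_smul_mem.1 this⟩

/-- Otherwise the image of `C` minus its repeller would fill the image of `C` up to one point,
while avoiding two given points other than the attractor. -/
lemma Dyn.rep_not_isolated [CompactSpace X] [l.NeBot] (d : Dyn g l 𝓐 stable im rep att)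
    (h : IsLocalConvPairing G 𝓐) {C : Set X} (hC : C ∈ 𝓐) (hs : stable C) {U : Set X}
    (hU : U ∈ 𝓝 (rep C)) : ∃ x ∈ C, x ∈ U ∧ x ≠ rep C := by
  have hbig := h.big _ (d.im_mem h hC hs)
  obtain ⟨y, hy, hya, -⟩ := exists_mem_ne_ne hbig (att C) (att C)
  obtain ⟨z, hz, hza, hzy⟩ := exists_mem_ne_ne hbig (att C) y
  obtain ⟨i, ⟨hi1, hi2⟩, hi⟩ := (((d.tendsto_inv h hC hs hy hya).eventually_mem hU).and
    ((d.tendsto_inv h hC hs hz hza).eventually_mem hU) |>.and (d.im_eq C hC hs)).exists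
  have hm : ∀ w ∈ im C, (g i)⁻¹ • w ∈ C := fun w hw => by
    rw [← mem_smul_set_iff_inv_smul_mem, hi]; exact hw
  by_cases he : (g i)⁻¹ • y = rep C
  · refine ⟨_, hm z hz, hi2, fun he' => hzy ?_⟩
    exact MulAction.injective (g i)⁻¹ (he'.trans he.symm)
  · exact ⟨_, hm y hy, hi1, he⟩

/-- If `D` separates `C`, then the images of `D` come arbitrarily close to the attractor of `C`:
two points of `C` in different components of `Dᶜ` are both attracted into a small connected
neighbourhood, which the image of `D` must therefore meet. -/
lemma Dyn.meets_of_sep [CompactSpace X] [LocallyConnectedSpace X] [ContinuousConstSMul G X]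
    [l.NeBot] (d : Dyn g l 𝓐 stable im rep att)
    (h : IsLocalConvPairing G 𝓐) {C D : Set X} (hC : C ∈ 𝓐) (hD : D ∈ 𝓐) (hsep : SepSet D C)
    {U : Set X} (hU : U ∈ 𝓝 (att C)) : ∀ᶠ i in l, (U ∩ g i • D).Nonempty := by
  obtain ⟨hCD, x, hx, y, hy, hxy⟩ := hsep
  -- a point of `C` may be moved off the repeller within its component of `Dᶜ`
  have move : ∀ x ∈ C, ∃ x' ∈ C, (stable C → x' ≠ rep C) ∧
      connectedComponentIn Dᶜ x' = connectedComponentIn Dᶜ x := by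
    intro x hx
    by_cases hc : stable C ∧ x = rep C
    · obtain ⟨hs, rfl⟩ := hc
      have hopen : IsOpen (connectedComponentIn Dᶜ (rep C)) :=
        (h.closed D hD).isOpen_compl.connectedComponentIn
      obtain ⟨x', h1, h2, h3⟩ := d.rep_not_isolated h hC hs
        (hopen.mem_nhds (mem_connectedComponentIn (hCD hx)))
      exact ⟨x', h1, fun _ => h3, (connectedComponentIn_eq h2).symm⟩
    · exact ⟨x, hx, fun hs he => hc ⟨hs, he⟩, rfl⟩
  obtain ⟨x', hx', hxr, hxe⟩ := move x hx
  obtain ⟨y', hy', hyr, hye⟩ := move y hy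
  obtain ⟨N, hNU, hNo, hN, hNc⟩ := locallyConnectedSpace_iff_subsets_isOpen_isConnected.1
    inferInstance (att C) U hU
  filter_upwards [(d.tendsto hC hx' hxr).eventually_mem (hNo.mem_nhds hN),
    (d.tendsto hC hy' hyr).eventually_mem (hNo.mem_nhds hN)] with i hi1 hi2
  by_contra hne
  have hsub : (g i)⁻¹ • N ⊆ Dᶜ := by
    intro w hw hwD
    refine hne ⟨g i • w, hNU ?_, smul_mem_smul_set hwD⟩
    simpa [mem_smul_set_iff_inv_smul_mem] using hw
  have hcon : IsPreconnected ((g i)⁻¹ • N) :=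
    hNc.isPreconnected.image _ (continuous_const_smul _).continuousOn
  have h1 : x' ∈ (g i)⁻¹ • N := by simpa [mem_smul_set_iff_inv_smul_mem] using hi1
  have h2 : y' ∈ (g i)⁻¹ • N := by simpa [mem_smul_set_iff_inv_smul_mem] using hi2
  apply hxy
  rw [← hxe, ← hye]
  exact connectedComponentIn_eq (hcon.subset_connectedComponentIn h1 hsub h2)

lemma Dyn.att_eq_of_sep_shrink [CompactSpace X] [LocallyConnectedSpace X]
    [ContinuousConstSMul G X] [l.NeBot] (d : Dyn g l 𝓐 stable im rep att)
    (h : IsLocalConvPairing G 𝓐) {C D : Set X} (hC : C ∈ 𝓐) (hD : D ∈ 𝓐) (hsep : SepSet D C)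
    (hs : ¬ stable D) : att C = att D := by
  by_contra hne
  obtain ⟨U, V, hU, hV, hUa, hVa, hUV⟩ := t2_separation hne
  obtain ⟨i, ⟨w, hw1, hw2⟩, hi⟩ := ((d.meets_of_sep h hC hD hsep (hU.mem_nhds hUa)).and
    (d.shrink D hD hs V (hV.mem_nhds hVa))).exists
  exact disjoint_left.1 hUV hw1 (hi hw2)

lemma Dyn.att_mem_of_sep_stable [CompactSpace X] [LocallyConnectedSpace X]
    [ContinuousConstSMul G X] [l.NeBot] (d : Dyn g l 𝓐 stable im rep att)
    (h : IsLocalConvPairing G 𝓐) {C D : Set X} (hC : C ∈ 𝓐) (hD : D ∈ 𝓐) (hsep : SepSet D C)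
    (hs : stable D) : att C ∈ im D := by
  rw [← (h.closed _ (d.im_mem h hD hs)).closure_eq, mem_closure_iff_nhds]
  intro U hU
  obtain ⟨i, hi1, hi2⟩ := ((d.meets_of_sep h hC hD hsep hU).and (d.im_eq D hD hs)).exists
  exact hi2 ▸ hi1

/-- Sets that separate each other have the same attractor. -/
lemma Dyn.att_eq_of_sep [CompactSpace X] [LocallyConnectedSpace X]
    [ContinuousConstSMul G X] [l.NeBot] (d : Dyn g l 𝓐 stable im rep att)
    (h : IsLocalConvPairing G 𝓐) {C D : Set X} (hC : C ∈ 𝓐) (hD : D ∈ 𝓐) (h1 : SepSet C D)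
    (h2 : SepSet D C) : att C = att D := by
  by_cases hsD : stable D
  · by_cases hsC : stable C
    · obtain ⟨w, hw1, hw2⟩ := d.inter_nonempty hC hD hsC hsD (d.att_mem C hC hsC)
        (d.att_mem_of_sep_stable h hC hD h2 hsD)
      exact (h2.1 hw1 hw2).elim
    · exact (d.att_eq_of_sep_shrink h hD hC h1 hsC).symm
  · exact d.att_eq_of_sep_shrink h hC hD h2 hsD

lemma Dyn.inter_of_crosses [CompactSpace X] [LocallyConnectedSpace X]
    [ContinuousConstSMul G X] [l.NeBot] (d : Dyn g l 𝓐 stable im rep att)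
    (h : IsLocalConvPairing G 𝓐) {C D : Set X} (hC : C ∈ 𝓐) (hD : D ∈ 𝓐) (hx : Crosses C D)
    (hne : att C ≠ att D) : (C ∩ D).Nonempty :=
  hx.resolve_right fun hh => hne (d.att_eq_of_sep h hC hD hh.1 hh.2)

lemma Dyn.eq_rep_of_mem [l.NeBot] (d : Dyn g l 𝓐 stable im rep att)
    {C D : Set X} (hC : C ∈ 𝓐) (hD : D ∈ 𝓐) (hne : att C ≠ att D) {x : X} (h1 : x ∈ C)
    (h2 : x ∈ D) : (stable C ∧ x = rep C) ∨ (stable D ∧ x = rep D) := by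
  by_contra hcon
  push Not at hcon
  exact hne (tendsto_nhds_unique (d.tendsto hC h1 hcon.1) (d.tendsto hD h2 hcon.2))

lemma Crosses.symm'_s10 {X : Type*} [TopologicalSpace X] {C D : Set X} (hx : Crosses C D) : Crosses D C :=
  hx.imp (fun hh => by rwa [inter_comm]) And.symm

lemma CrossSeqAvoiding.symm'_s10 {X : Type*} [TopologicalSpace X] {𝓐 : Set (Set X)} {C D E : Set X} (hx : CrossSeqAvoiding 𝓐 C D E) :
    CrossSeqAvoiding 𝓐 D C E := by
  obtain ⟨k, hk, c, h0, h1, hm, hc, he⟩ := hx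
  refine ⟨k, hk, fun i => c (k + 1 - i), by simpa using h1, by simpa using h0,
    fun i _ => hm _ (by omega), fun i hi => ?_, fun i hi1 hi2 => he _ (by omega) (by omega)⟩
  have := hc (k - i) (by omega)
  rw [show k - i + 1 = k + 1 - i by omega, show k - i = k + 1 - (i + 1) by omega] at this
  exact this.symm'_s10

/-! ### Crossing sets have the same attractor -/

/-- The case of `Dyn.att_eq_of_rep_ne` in which the sets meet in the repeller of `D`. If the
attractors differed, `att C` would be the image of `rep D`. A crossing sequence from `C` to `D`
avoiding both repellers then consists of shrinking sets attracted to `att C`, since a stable set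
with `att C` in its image contains `rep D`; its last intermediate term meets `D` off `rep D`,
which forces `att C = att D`. -/
lemma Dyn.att_eq_of_rep_ne_aux [CompactSpace X] [LocallyConnectedSpace X]
    [ContinuousConstSMul G X] [l.NeBot] (d : Dyn g l 𝓐 stable im rep att)
    (h : IsLocalConvPairing G 𝓐) {C D : Set X} (hC : C ∈ 𝓐) (hD : D ∈ 𝓐) (hsC : stable C)
    (hsD : stable D) (hr : rep C ≠ rep D) (hrD : rep D ∈ C) : att C = att D := by
  by_contra hne
  have hrDD := d.rep_mem D hD hsD
  have hsub : ∀ x ∈ D ∩ C, x = rep C ∨ x = rep D := fun x hx =>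
    (d.eq_rep_of_mem hC hD hne hx.2 hx.1).imp And.right And.right
  -- `att C` is eventually the image of the repeller of `D`
  have hfix : ∀ᶠ i in l, g i • rep D = att C := by
    have hmem : att C ∈ im D :=
      d.lim_mem_im h hD hsD hrDD (d.tendsto hC hrD fun _ => hr.symm)
    have hn : ∀ᶠ i in l, rep C ∈ D → g i • rep C ≠ att C := by
      by_cases hCD : rep C ∈ D
      · filter_upwards [(d.tendsto hD hCD fun _ => hr).eventually_ne (Ne.symm hne)] with i hi _
        exact hi
      · exact Eventually.of_forall fun i hh => (hCD hh).elim
    filter_upwards [hn, d.inter_im hD hC hsD hsC] with i hi1 hi2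
    have h3 : att C ∈ g i • (D ∩ C) := by rw [hi2]; exact ⟨hmem, d.att_mem C hC hsC⟩
    obtain ⟨x, hx, hxe⟩ := h3
    rcases hsub x hx with rfl | rfl
    · exact (hi1 hx.1 hxe).elim
    · exact hxe
  have hfix' : ∀ E ∈ 𝓐, stable E → att C ∈ im E → rep D ∈ E := by
    intro E hE hsE ha
    obtain ⟨i, hi1, hi2⟩ := (hfix.and (d.im_eq E hE hsE)).exists
    rw [← hi1, ← hi2] at ha
    exact smul_mem_smul_set_iff.1 ha
  have hseq : CrossSeqAvoiding 𝓐 C D {rep C, rep D} := by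
    have hsub' : D ∩ C ⊆ {rep C, rep D} := hsub
    have hcon := h.connect D hD C hC ((encard_le_encard hsub').trans (encard_pair_le' _ _))
    apply CrossSeqAvoiding.symm'_s10
    by_cases hCD : rep C ∈ D
    · have he : D ∩ C = {rep C, rep D} := by
        refine hsub'.antisymm ?_
        rintro x (rfl | rfl)
        · exact ⟨hCD, d.rep_mem C hC hsC⟩
        · exact ⟨hrDD, hrD⟩
      rw [← he]
      refine hcon.2 ?_
      rintro ⟨c, hc⟩
      rw [he] at hc
      have h1 : rep C = c := by
        have : rep C ∈ ({c} : Set X) := hc ▸ Or.inl rfl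
        exact this
      have h2 : rep D = c := by
        have : rep D ∈ ({c} : Set X) := hc ▸ Or.inr rfl
        exact this
      exact hr (h1.trans h2.symm)
    · refine hcon.1 (rep D) ?_ (rep C) (d.rep_mem C hC hsC) hr
      refine Subset.antisymm (fun x hx => ?_) (singleton_subset_iff.2 ⟨hrDD, hrD⟩)
      rcases hsub x hx with rfl | rfl
      · exact (hCD hx.1).elim
      · rfl
  obtain ⟨k, hk, c, h0, h1, hm, hc, he⟩ := hseq
  have hav : ∀ j, 1 ≤ j → j ≤ k → rep C ∉ c j ∧ rep D ∉ c j := fun j hj hj' =>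
    ⟨fun hh => by have := he j hj hj'; exact this.le ⟨hh, Or.inl rfl⟩,
     fun hh => by have := he j hj hj'; exact this.le ⟨hh, Or.inr rfl⟩⟩
  -- one step of the crossing sequence
  have step : ∀ E ∈ 𝓐, ∀ F ∈ 𝓐, att E = att C → rep D ∉ F → Crosses E F →
      (∀ x ∈ E, x ∈ F → Tendsto (fun i => g i • x) l (𝓝 (att C))) →
      att F = att C ∧ ¬ stable F := by
    intro E hE F hF hEa hrF hx ht
    have hsF : att F = att C → ¬ stable F := fun hFa hsF =>
      hrF (hfix' F hF hsF (hFa ▸ d.att_mem F hF hsF))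
    suffices att F = att C from ⟨this, hsF this⟩
    by_contra hFa
    obtain ⟨x, hxE, hxF⟩ := d.inter_of_crosses h hE hF hx (fun hh => hFa (hh ▸ hEa))
    by_cases hs : stable F
    · exact hrF (hfix' F hF hs (d.lim_mem_im h hF hs hxF (ht x hxE hxF)))
    · exact hFa (tendsto_nhds_unique (d.tendsto hF hxF fun hs' => (hs hs').elim) (ht x hxE hxF))
  have main : ∀ j, 1 ≤ j → j ≤ k → att (c j) = att C ∧ ¬ stable (c j) := by
    intro j hj
    induction j, hj using Nat.le_induction with
    | base =>
      intro hj'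
      have hx := hc 0 (by omega)
      rw [h0] at hx
      refine step C hC (c 1) (hm _ (by omega)) rfl (hav 1 le_rfl hj').2 hx fun x hx1 hx2 => ?_
      exact d.tendsto hC hx1 fun _ hxe => (hav 1 le_rfl hj').1 (hxe ▸ hx2)
    | succ j hj ih =>
      intro hj'
      obtain ⟨i1, i2⟩ := ih (by omega)
      refine step (c j) (hm _ (by omega)) (c (j + 1)) (hm _ (by omega)) i1
        (hav _ (by omega) hj').2 (hc j (by omega)) fun x hx1 hx2 => ?_
      exact i1 ▸ d.tendsto (hm j (by omega)) hx1 fun hs => (i2 hs).elim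
  obtain ⟨m1, m2⟩ := main k hk le_rfl
  have hx := hc k le_rfl
  rw [h1] at hx
  have hne' : att (c k) ≠ att D := m1 ▸ hne
  obtain ⟨x, hx1, hx2⟩ := d.inter_of_crosses h (hm k (by omega)) hD hx hne'
  rcases d.eq_rep_of_mem (hm k (by omega)) hD hne' hx1 hx2 with hh | hh
  · exact m2 hh.1
  · exact (hav k hk le_rfl).2 (hh.2 ▸ hx1)

/-- Intersecting stable sets with different repellers have the same attractor. -/
lemma Dyn.att_eq_of_rep_ne [CompactSpace X] [LocallyConnectedSpace X]
    [ContinuousConstSMul G X] [l.NeBot] (d : Dyn g l 𝓐 stable im rep att)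
    (h : IsLocalConvPairing G 𝓐) {C D : Set X} (hC : C ∈ 𝓐) (hD : D ∈ 𝓐) (hsC : stable C)
    (hsD : stable D) (hr : rep C ≠ rep D) (hi : (C ∩ D).Nonempty) : att C = att D := by
  by_contra hne
  obtain ⟨x, hx1, hx2⟩ := hi
  rcases d.eq_rep_of_mem hC hD hne hx1 hx2 with ⟨-, rfl⟩ | ⟨-, rfl⟩
  · exact hne (d.att_eq_of_rep_ne_aux h hD hC hsD hsC hr.symm hx2).symm
  · exact hne (d.att_eq_of_rep_ne_aux h hC hD hsC hsD hr hx1)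

/-- A stable set `C` and a shrinking set `D` that cross have the same attractor. Otherwise they
meet only in `rep C`, and `att D` lies in `im C`. A crossing sequence from `D` to `C` avoiding
`rep C` cannot leave the attractor `att D`: a stable set involved in a change would have
`att D` in its image, hence the same repeller as `C`. -/
lemma Dyn.att_eq_of_stable_shrink [CompactSpace X] [LocallyConnectedSpace X]
    [ContinuousConstSMul G X] [l.NeBot] (d : Dyn g l 𝓐 stable im rep att)
    (h : IsLocalConvPairing G 𝓐) {C D : Set X} (hC : C ∈ 𝓐) (hD : D ∈ 𝓐) (hsC : stable C)
    (hsD : ¬ stable D) (hx : Crosses C D) : att C = att D := by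
  by_contra hne
  obtain ⟨x, hx1, hx2⟩ := d.inter_of_crosses h hC hD hx hne
  have hrep : ∀ y ∈ C, y ∈ D → y = rep C := fun y h1 h2 =>
    ((d.eq_rep_of_mem hC hD hne h1 h2).resolve_right fun hh => hsD hh.1).2
  obtain rfl := hrep x hx1 hx2
  have hz : att D ∈ im C :=
    d.lim_mem_im h hC hsC hx1 (d.tendsto hD hx2 fun hs => (hsD hs).elim)
  have hDC : D ∩ C = {rep C} :=
    Subset.antisymm (fun y hy => hrep y hy.2 hy.1) (singleton_subset_iff.2 ⟨hx2, hx1⟩)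
  obtain ⟨b, hb, hbr, -⟩ := exists_mem_ne_ne (h.big C hC) (rep C) (rep C)
  obtain ⟨k, hk, c, h0, h1, hm, hc, he⟩ := (h.connect D hD C hC
    (by rw [hDC, encard_singleton]; norm_num)).1 _ hDC b hb hbr
  have hav : ∀ j, 1 ≤ j → j ≤ k → rep C ∉ c j := fun j hj hj' hh => by
    have := he j hj hj'; exact this.le ⟨hh, Or.inr rfl⟩
  have main : ∀ j, j ≤ k + 1 → att (c j) = att D := by
    intro j
    induction j with
    | zero => intro _; rw [h0]
    | succ j ih =>
      intro hj
      have hE := hm j (by omega)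
      have hF := hm (j + 1) hj
      have ha := ih (by omega)
      have hcr := hc j (by omega)
      by_contra hF'
      have hne' : att (c j) ≠ att (c (j + 1)) := fun hh => hF' (hh ▸ ha)
      have hsE : ¬ stable (c j) := by
        intro hsE
        rcases Nat.eq_zero_or_pos j with rfl | hj0
        · exact hsD (h0 ▸ hsE)
        · have hr : rep (c j) = rep C := by
            by_contra hr
            exact hne ((d.att_eq_of_rep_ne h hE hC hsE hsC hr
              (d.inter_nonempty hE hC hsE hsC (ha ▸ d.att_mem _ hE hsE) hz)).symm.trans ha)
          exact hav j hj0 (by omega) (hr ▸ d.rep_mem _ hE hsE)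
      obtain ⟨x, hxE, hxF⟩ := d.inter_of_crosses h hE hF hcr hne'
      obtain ⟨hsF, rfl⟩ := (d.eq_rep_of_mem hE hF hne' hxE hxF).resolve_left fun hh => hsE hh.1
      have hzF : att D ∈ im (c (j + 1)) :=
        d.lim_mem_im h hF hsF hxF (ha ▸ d.tendsto hE hxE fun hs => (hsE hs).elim)
      have hr : rep (c (j + 1)) = rep C := tendsto_nhds_unique
        (d.tendsto_inv h hF hsF hzF (Ne.symm hF')) (d.tendsto_inv h hC hsC hz (Ne.symm hne))
      rw [hr] at hxE hxF
      rcases Nat.eq_zero_or_pos j with rfl | hj0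
      · exact hav 1 le_rfl hk hxF
      · exact hav j hj0 (by omega) hxE
  exact hne (h1 ▸ main (k + 1) le_rfl)

/-- The only way in which crossing sets could have different attractors: both are stable, and
they meet exactly in their common repeller. -/
lemma Dyn.of_att_ne [CompactSpace X] [LocallyConnectedSpace X]
    [ContinuousConstSMul G X] [l.NeBot] (d : Dyn g l 𝓐 stable im rep att)
    (h : IsLocalConvPairing G 𝓐) {C D : Set X} (hC : C ∈ 𝓐) (hD : D ∈ 𝓐) (hx : Crosses C D)
    (hne : att C ≠ att D) : stable C ∧ stable D ∧ rep C = rep D ∧ C ∩ D = {rep C} := by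
  have hi := d.inter_of_crosses h hC hD hx hne
  by_cases hsC : stable C
  · by_cases hsD : stable D
    · have hr : rep C = rep D := by
        by_contra hr
        exact hne (d.att_eq_of_rep_ne h hC hD hsC hsD hr hi)
      refine ⟨hsC, hsD, hr, hi.subset_singleton_iff.1 fun x hx => ?_⟩
      exact (d.eq_rep_of_mem hC hD hne hx.1 hx.2).elim And.right fun hh => hh.2.trans hr.symm
    · exact (hne (d.att_eq_of_stable_shrink h hC hD hsC hsD hx)).elim
  · by_cases hsD : stable D
    · exact (hne (d.att_eq_of_stable_shrink h hD hC hsD hsC hx.symm'_s10).symm).elim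
    · obtain ⟨x, h1, h2⟩ := hi
      rcases d.eq_rep_of_mem hC hD hne h1 h2 with hh | hh
      · exact (hsC hh.1).elim
      · exact (hsD hh.1).elim

/-- Crossing sets have the same attractor. -/
lemma Dyn.att_eq_of_crosses [CompactSpace X] [LocallyConnectedSpace X]
    [ContinuousConstSMul G X] [l.NeBot] (d : Dyn g l 𝓐 stable im rep att)
    (h : IsLocalConvPairing G 𝓐) {C D : Set X} (hC : C ∈ 𝓐) (hD : D ∈ 𝓐) (hx : Crosses C D) :
    att C = att D := by
  by_contra hne
  obtain ⟨hsC, hsD, hr, hCD⟩ := d.of_att_ne h hC hD hx hne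
  rw [hr] at hCD
  -- Leaving `b` and the repeller out, a crossing sequence from `C` reaches the attractor of `D`
  -- through a stable set `L`, whose intersection with `D` is eventually mapped to `att D`.
  have key : ∀ b ∈ D, b ≠ rep D →
      ∃ x ∈ D, x ≠ rep D ∧ x ≠ b ∧ ∀ᶠ i in l, g i • x = att D := by
    intro b hb hbr
    obtain ⟨k, hk, c, h0, h1, hm, hc, he⟩ := (h.connect C hC D hD
      (by rw [hCD, encard_singleton]; norm_num)).1 _ hCD b hb hbr
    have hav : ∀ j, 1 ≤ j → j ≤ k → b ∉ c j ∧ rep D ∉ c j := fun j hj hj' =>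
      ⟨fun hh => by have := he j hj hj'; exact this.le ⟨hh, Or.inl rfl⟩,
       fun hh => by have := he j hj hj'; exact this.le ⟨hh, Or.inr rfl⟩⟩
    obtain ⟨L, hL, hsL, haL, hbL, hrL⟩ :
        ∃ L ∈ 𝓐, stable L ∧ att L = att D ∧ b ∉ L ∧ rep D ∉ L := by
      by_contra hno
      have main : ∀ j, j ≤ k → att (c j) ≠ att D := by
        intro j
        induction j with
        | zero => intro _; rw [h0]; exact hne
        | succ j ih =>
          intro hj ha
          have hF := hm (j + 1) (by omega)
          have := d.of_att_ne h (hm j (by omega)) hF (hc j (by omega)) (ha ▸ ih (by omega))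
          exact hno ⟨_, hF, this.2.1, ha, (hav _ (by omega) hj).1, (hav _ (by omega) hj).2⟩
      have hcr := hc k le_rfl
      rw [h1] at hcr
      obtain ⟨-, -, h3, h4⟩ := d.of_att_ne h (hm k (by omega)) hD hcr (main k le_rfl)
      have h5 : rep D ∈ c k ∩ D := by rw [h4, h3]; rfl
      exact (hav k hk le_rfl).2 h5.1
    have hrr : rep L ≠ rep D := fun hh => hrL (hh ▸ d.rep_mem L hL hsL)
    obtain ⟨x, hxL, hxD⟩ := d.inter_nonempty hL hD hsL hsD (haL ▸ d.att_mem L hL hsL)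
      (d.att_mem D hD hsD)
    refine ⟨x, hxD, fun hh => hrL (hh ▸ hxL), fun hh => hbL (hh ▸ hxL), ?_⟩
    filter_upwards [d.inter_im hL hD hsL hsD] with i hi
    have hxi : g i • x ∈ im L ∩ im D := hi ▸ smul_mem_smul_set ⟨hxL, hxD⟩
    by_contra hn
    exact hrr (tendsto_nhds_unique (d.tendsto_inv h hL hsL hxi.1 (haL ▸ hn))
      (d.tendsto_inv h hD hsD hxi.2 hn))
  obtain ⟨b, hb, hbr, -⟩ := exists_mem_ne_ne (h.big D hD) (rep D) (rep D)
  obtain ⟨x, hxD, hxr, -, hx1⟩ := key b hb hbr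
  obtain ⟨y, -, -, hyx, hy1⟩ := key x hxD hxr
  obtain ⟨i, hi1, hi2⟩ := (hx1.and hy1).exists
  exact hyx (MulAction.injective (g i) (hi2.trans hi1.symm))

/-- All members of the family have the same attractor. -/
lemma Dyn.att_eq [CompactSpace X] [LocallyConnectedSpace X]
    [ContinuousConstSMul G X] [l.NeBot] (d : Dyn g l 𝓐 stable im rep att)
    (h : IsLocalConvPairing G 𝓐) {C D : Set X} (hC : C ∈ 𝓐) (hD : D ∈ 𝓐) :
    att C = att D := by
  by_cases hi : (C ∩ D).Nonempty
  · exact d.att_eq_of_crosses h hC hD (Or.inl hi)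
  · rw [not_nonempty_iff_eq_empty] at hi
    obtain ⟨k, hk, c, h0, h1, hm, hc, -⟩ := (h.connect C hC D hD (by simp [hi])).2 (by
      rintro ⟨c, hc⟩
      rw [hi] at hc
      exact singleton_ne_empty c hc.symm)
    have main : ∀ j, j ≤ k + 1 → att (c j) = att C := by
      intro j
      induction j with
      | zero => intro _; rw [h0]
      | succ j ih =>
        intro hj
        rw [← ih (by omega)]
        exact (d.att_eq_of_crosses h (hm _ (by omega)) (hm _ hj) (hc j (by omega))).symm
    exact h1 ▸ (main (k + 1) le_rfl).symm

end

/-! ### Extracting tame subsequences -/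

lemma IsLocalConvPairing.diam_pos [CompactSpace X] {𝓐 : Set (Set X)}
    (h : IsLocalConvPairing G 𝓐) {C : Set X} (hC : C ∈ 𝓐) : 0 < Metric.diam C := by
  have hnt : C.Nontrivial := one_lt_encard_iff_nontrivial.1 (lt_trans (by norm_num) (h.big C hC))
  exact Metric.diam_pos hnt Metric.isBounded_of_compactSpace

lemma IsLocalConvPairing.countable [CompactSpace X] {𝓐 : Set (Set X)}
    (h : IsLocalConvPairing G 𝓐) : 𝓐.Countable := by
  have : 𝓐 ⊆ ⋃ k : ℕ, {C ∈ 𝓐 | 1 / ((k : ℝ) + 1) < Metric.diam C} := by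
    intro C hC
    obtain ⟨k, hk⟩ := exists_nat_one_div_lt (h.diam_pos hC)
    exact mem_iUnion.2 ⟨k, hC, hk⟩
  exact (countable_iUnion fun k => (h.null _ (by positivity)).countable).mono this

/-- Every sequence of distinct elements has a subsequence that is tame on a given member of the
family: if no image of `C` recurs infinitely often, nullity makes the images shrink; otherwise
the stabiliser of `C` acts as a convergence group. -/
lemma exists_tame [CompactSpace X] [ContinuousConstSMul G X] {𝓐 : Set (Set X)}
    (h : IsLocalConvPairing G 𝓐) {C : Set X} (hC : C ∈ 𝓐) {u : ℕ → G}
    (hu : Function.Injective u) : ∃ φ : ℕ → ℕ, StrictMono φ ∧ Tame u (map φ atTop) C := by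
  by_cases hrec : ∃ C', ∃ᶠ i in atTop, u i • C = C'
  · obtain ⟨C', hC'⟩ := hrec
    obtain ⟨φ, hφ, hφC⟩ := extraction_of_frequently_atTop hC'
    obtain ⟨ψ, hψ, r, a, hr, ha, hconv⟩ := h.stabConv C hC
      (fun i => (u (φ 0))⁻¹ * u (φ i))
      (fun i => by
        change ((u (φ 0))⁻¹ * u (φ i)) • C = C
        rw [mul_smul, hφC i, ← hφC 0, inv_smul_smul])
      (fun i j hij => hφ.injective (hu (mul_left_cancel hij)))
    refine ⟨φ ∘ ψ, hφ.comp hψ, Or.inr ⟨C', r, u (φ 0) • a, ?_, hr, ?_, ?_⟩⟩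
    · exact eventually_map.2 (Eventually.of_forall fun i => hφC (ψ i))
    · exact hφC 0 ▸ smul_mem_smul_set ha
    · intro K hK hKc hrK U hU
      obtain ⟨V, hVU, hV, haV⟩ := mem_nhds_iff.1 hU
      have := hconv K hK hKc hrK ((u (φ 0))⁻¹ • V) (hV.smul _)
        (by simpa [mem_smul_set_iff_inv_smul_mem] using haV)
      refine eventually_map.2 (this.mono fun i hi => ?_)
      rintro _ ⟨x, hx, rfl⟩
      apply hVU
      have h1 := hi (mem_image_of_mem _ hx)
      simpa [mem_smul_set_iff_inv_smul_mem, mul_smul] using h1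
  · push Not at hrec
    have hdiam : ∀ ε : ℝ, 0 < ε → ∀ᶠ i in atTop, Metric.diam (u i • C) ≤ ε := by
      intro ε hε
      have := (eventually_all_finite (h.null ε hε)).2
        (fun E _ => hrec E)
      filter_upwards [this] with i hi
      by_contra hlt
      exact hi _ ⟨h.invariant _ _ hC, not_le.1 hlt⟩ rfl
    obtain ⟨x, hx⟩ : C.Nonempty := encard_pos.1 (lt_trans (by norm_num) (h.big C hC))
    obtain ⟨z, φ, hφ, hz⟩ := CompactSpace.tendsto_subseq (fun i => u i • x)
    refine ⟨φ, hφ, Or.inl ⟨z, fun U hU => ?_⟩⟩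
    obtain ⟨ε, hε, hεU⟩ := Metric.mem_nhds_iff.1 hU
    refine eventually_map.2 ?_
    filter_upwards [hφ.tendsto_atTop.eventually (hdiam (ε / 2) (by positivity)),
      hz.eventually_mem (Metric.ball_mem_nhds z (half_pos hε))] with i hi1 hi2 y hy
    apply hεU
    have h1 : dist y (u (φ i) • x) ≤ ε / 2 :=
      (Metric.dist_le_diam_of_mem Metric.isBounded_of_compactSpace hy
        (smul_mem_smul_set hx)).trans hi1
    have h2 : dist (u (φ i) • x) z < ε / 2 := hi2
    exact Metric.mem_ball.2 (by linarith [dist_triangle y (u (φ i) • x) z])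

end Dynamics

/-- Diagonal extraction for countably many properties, each inherited by finer filters and each
achievable by refining any given subsequence. -/
lemma exists_diagonal (P : ℕ → Filter ℕ → Prop) (hmono : ∀ j l l', l' ≤ l → P j l → P j l')
    (hex : ∀ j (φ : ℕ → ℕ), StrictMono φ → ∃ ψ : ℕ → ℕ, StrictMono ψ ∧
      P j (map (φ ∘ ψ) atTop)) :
    ∃ φ : ℕ → ℕ, StrictMono φ ∧ ∀ j, P j (map φ atTop) := by
  choose ψ hψ hP using hex
  let Φ : ℕ → {φ : ℕ → ℕ // StrictMono φ} := fun j =>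
    Nat.rec ⟨id, strictMono_id⟩ (fun j φ => ⟨φ.1 ∘ ψ j φ.1 φ.2, φ.2.comp (hψ j φ.1 φ.2)⟩) j
  have hΦ : ∀ j, (Φ (j + 1)).1 = (Φ j).1 ∘ ψ j (Φ j).1 (Φ j).2 := fun j => rfl
  have hfac : ∀ j k, ∃ χ : ℕ → ℕ, StrictMono χ ∧ (Φ (j + k)).1 = (Φ j).1 ∘ χ := by
    intro j k
    induction k with
    | zero => exact ⟨id, strictMono_id, rfl⟩
    | succ k ih =>
      obtain ⟨χ, hχ, he⟩ := ih
      refine ⟨χ ∘ ψ (j + k) (Φ (j + k)).1 (Φ (j + k)).2, hχ.comp (hψ _ _ _), ?_⟩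
      rw [← add_assoc, hΦ, ← Function.comp_assoc, ← he]
  refine ⟨fun j => (Φ j).1 j, strictMono_nat_of_lt_succ fun j => ?_, fun j => ?_⟩
  · rw [hΦ]
    exact (Φ j).2 ((Nat.lt_succ_self j).trans_le ((hψ j _ (Φ j).2).id_le _))
  · refine hmono j (map (Φ (j + 1)).1 atTop) _ ?_ (hΦ j ▸ hP j _ (Φ j).2)
    intro s hs
    obtain ⟨N, hN⟩ := mem_atTop_sets.1 (mem_map.1 hs)
    refine mem_map.2 (mem_atTop_sets.2 ⟨max N (j + 1), fun m hm => ?_⟩)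
    obtain ⟨k, rfl⟩ := Nat.exists_eq_add_of_le ((le_max_right _ _).trans hm)
    obtain ⟨χ, hχ, he⟩ := hfac (j + 1) k
    change (Φ (j + 1 + k)).1 (j + 1 + k) ∈ s
    rw [he]
    exact hN _ (((le_max_left _ _).trans hm).trans (hχ.id_le _))

lemma exists_injective_subseq {G : Type*} {g : ℕ → G} (hg : ∀ γ, ∀ᶠ i in atTop, g i ≠ γ) :
    ∃ φ : ℕ → ℕ, StrictMono φ ∧ Function.Injective (g ∘ φ) := by
  obtain ⟨φ, -, hφ⟩ := exists_seq_of_forall_finset_exists (fun _ : ℕ => True)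
    (fun m k => m < k ∧ g k ≠ g m) (fun s _ => by
      have h1 := (Finset.eventually_all s (l := atTop) (p := fun m k => m < k ∧ g k ≠ g m)).2
        fun m _ => (eventually_gt_atTop m).and (hg (g m))
      obtain ⟨k, hk⟩ := h1.exists
      exact ⟨k, trivial, hk⟩)
  refine ⟨φ, fun i j hij => (hφ i j hij).1, fun i j hij => ?_⟩
  rcases lt_trichotomy i j with hlt | he | hlt
  · exact ((hφ i j hlt).2 hij.symm).elim
  · exact he
  · exact ((hφ j i hlt).2 hij).elim

/-! ### The attraction theorem -/

/-- Corollary: if `(g_i) ⊆ st(A)` acts as a convergence sequence on `A` with attractor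
`p` and repeller `n`, then for any `B ∈ 𝓐` a subsequence attracts every compact subset
of `B \ {n}` to `p`. -/
theorem attract_far {G X : Type*} [Group G] [MulAction G X]
    [MetricSpace X] [CompactSpace X] [ConnectedSpace X] [LocallyConnectedSpace X]
    [ContinuousConstSMul G X]
    (hcut : ∀ x : X, IsPreconnected ({x}ᶜ : Set X))
    (𝓐 : Set (Set X)) (h : IsLocalConvPairing G 𝓐)
    (A B : Set X) (hA : A ∈ 𝓐) (hB : B ∈ 𝓐)
    (g : ℕ → G) (hg : ∀ i, g i ∈ stab G A) (n p : X)
    (hconv : ConvSeqOn A (fun i (x : X) => g i • x) n p) :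
    ∃ k : ℕ → ℕ, StrictMono k ∧ ∀ C : Set X, C ⊆ B → IsCompact C → n ∉ C →
      ∀ U : Set X, IsOpen U → p ∈ U → ∀ᶠ i in atTop, g (k i) • C ⊆ U := by
  obtain ⟨hnA, hpA, hcv⟩ := hconv
  have hpt : ∀ x ∈ A, x ≠ n → Tendsto (fun i => g i • x) atTop (𝓝 p) := by
    intro x hx hxn
    rw [tendsto_nhds]
    intro U hU hpU
    filter_upwards [hcv {x} (singleton_subset_iff.2 hx) isCompact_singleton
      (fun hh => hxn hh.symm) U hU hpU] with i hi
    exact hi ⟨x, rfl, rfl⟩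
  -- no group element recurs infinitely often: it would send two points of `A` to `p`
  have hrec : ∀ γ, ∀ᶠ i in atTop, g i ≠ γ := by
    intro γ
    by_contra hcon
    have hfr : ∃ᶠ i in atTop, g i = γ := by simpa [Filter.Frequently] using hcon
    have hsend : ∀ x ∈ A, x ≠ n → γ • x = p := by
      intro x hx hxn
      by_contra hne
      obtain ⟨i, hi1, hi2⟩ := (hfr.and_eventually
        ((hpt x hx hxn).eventually_ne (Ne.symm hne))).exists
      exact hi2 (by rw [hi1])
    obtain ⟨x, hx, hxn, -⟩ := exists_mem_ne_ne (h.big A hA) n n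
    obtain ⟨y, hy, hyn, hyx⟩ := exists_mem_ne_ne (h.big A hA) n x
    exact hyx (MulAction.injective γ ((hsend y hy hyn).trans (hsend x hx hxn).symm))
  obtain ⟨φ₀, hφ₀, hinj⟩ := exists_injective_subseq hrec
  obtain ⟨e, he⟩ := h.countable.exists_eq_range ⟨A, hA⟩
  have hmem : ∀ j, e j ∈ 𝓐 := fun j => he ▸ mem_range_self j
  obtain ⟨φ₁, hφ₁, htame⟩ := exists_diagonal
    (fun j l => Tame (g ∘ φ₀) l (e j) ∧ Tame (fun i => (g (φ₀ i))⁻¹) l (e j))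
    (fun j l l' hl hh => ⟨hh.1.mono hl, hh.2.mono hl⟩) (by
      intro j φ hφ
      obtain ⟨ψ₁, hψ₁, ht₁⟩ := exists_tame h (hmem j) (hinj.comp hφ.injective)
      obtain ⟨ψ₂, hψ₂, ht₂⟩ := exists_tame h (hmem j) (u := fun i => (g (φ₀ (φ (ψ₁ i))))⁻¹)
        (inv_injective.comp (hinj.comp (hφ.comp hψ₁).injective))
      refine ⟨ψ₁ ∘ ψ₂, hψ₁.comp hψ₂, ?_, ?_⟩
      · exact ht₁.mono (l' := map (ψ₁ ∘ ψ₂) atTop)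
          (by rw [← Filter.map_map]; exact Filter.map_mono hψ₂.tendsto_atTop)
      · exact ht₂)
  have hk : StrictMono (φ₀ ∘ φ₁) := hφ₀.comp hφ₁
  refine ⟨φ₀ ∘ φ₁, hk, ?_⟩
  set u : ℕ → G := fun i => g (φ₀ (φ₁ i)) with hu
  have : Nonempty X := ⟨p⟩
  have ht₁ : ∀ C ∈ 𝓐, Tame u atTop C := by
    intro C hC
    rw [he] at hC
    obtain ⟨j, rfl⟩ := hC
    exact (htame j).1
  have ht₂ : ∀ C ∈ 𝓐, Tame (fun i => (u i)⁻¹) atTop C := by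
    intro C hC
    rw [he] at hC
    obtain ⟨j, rfl⟩ := hC
    exact (htame j).2
  obtain ⟨stable, im, rep, att, d⟩ := exists_dyn ht₁
  obtain ⟨stable', im', rep', att', d'⟩ := exists_dyn ht₂
  have hattA : att A = p := by
    obtain ⟨x, hx, hxn, hxr⟩ := exists_mem_ne_ne (h.big A hA) n (rep A)
    exact tendsto_nhds_unique (d.tendsto hA hx fun _ => hxr)
      ((hpt x hx hxn).comp hk.tendsto_atTop)
  have hatt : att B = p := (d.att_eq h hB hA).trans hattA
  -- the attractor of the inverse sequence is the repeller `n`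
  have hattA' : att' A = n := by
    obtain ⟨y, hy, hyp, hyr⟩ := exists_mem_ne_ne (h.big A hA) p (rep' A)
    refine tendsto_nhds_unique (d'.tendsto hA hy fun _ => hyr) ?_
    refine tendsto_inv_of_conv (g := u) (C' := A) (h.closed A hA)
      (Eventually.of_forall fun i => hg _) ?_ hy hyp
    intro K hK hKc hnK U hU
    obtain ⟨V, hVU, hV, hpV⟩ := mem_nhds_iff.1 hU
    filter_upwards [hk.tendsto_atTop.eventually (hcv K hK hKc hnK V hV hpV)] with i hi
    exact Subset.trans hi hVU
  intro C hCB hCc hnC U hU hpU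
  have hUn : U ∈ 𝓝 (att B) := hatt ▸ hU.mem_nhds hpU
  by_cases hs : stable B
  · have hrep : rep B = n := by
      have hi := d.im_mem h hB hs
      obtain ⟨y, hy, hyp, hyr⟩ := exists_mem_ne_ne (h.big _ hi) (att B) (rep' (im B))
      exact (tendsto_nhds_unique (d.tendsto_inv h hB hs hy hyp)
        (d'.tendsto hi hy fun _ => hyr)).trans ((d'.att_eq h hi hA).trans hattA')
    exact d.conv B hB hs C hCB hCc (hrep ▸ hnC) U hUn
  · filter_upwards [d.shrink B hB hs U hUn] with i hi
    exact (smul_set_mono hCB).trans hi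
end
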